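/- arXiv:0706.2731 — 2 statements merged into one kernel-verified Lean document; each statement's English description precedes it below -/
import Mathlib

section
/- Let S = R/J be a quotient of a polynomial ring R over a field k by a homogeneous ideal J, and let M be a finitely generated graded S-module. Then for every i, b_i^R(M) ≤ max over p+q=i of (b_p^S(M) + b_q^R(S)), where b_i^A(M) denotes the maximal degree of a minimal i-th syzygy of M over A, i.e. the largest j with Tor_i^A(M,k)_j ≠ 0 (and −∞ if this Tor vanishes). -/
/-!
The proof iterates one step of dimension shifting instead of using the change-of-rings spectral
sequence. Fix a graded free resolution `K` of the residue field `R ⧸ R₊` and write `VT K X i j`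
for exactness of the degree `j` strand of `K ⊗ X` at `K i ⊗ X`, that is `Tor_i(X, k)_j = 0`.

If `⋯ → C 1 → C 0 → X → 0` is an exact complex of graded modules and
`Tor_q(C p, k)_j = 0` whenever `p + q = i`, then `Tor_i(X, k)_j = 0`: split the complex into
short exact sequences and use the long exact sequence (`vt_of_res`). This is applied twice. For
the minimal `S`-resolution of `M`, viewed over `R`, each term is a sum of copies of `S(-b)`, so
`Tor_i(M, k)_j` vanishes if all the `Tor_q(S, k)_{j-b}` do, where `b` is the degree of a generator
in step `p = i - q`. For the minimal `R`-resolution of `S`, each term is a sum of copies of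
`R(-c)`, and `Tor_*(R, k)` is concentrated in homological and internal degree zero (`vt_ring_succ`,
`vt_ring_zero`), so `Tor_q(S, k)_{j-b}` vanishes unless `j - b` is the degree `c` of a generator in
step `q`. Hence `Tor_i(M, k)_j = 0` unless `j = b + c` for such `b` and `c`.

The graded Betti numbers in the statement are computed from minimal resolutions of the modules
rather than from `K`, so the two are compared. Minimality makes the differentials vanish modulo the
irrelevant ideal, hence the nonzero degrees of the homology of `F ⊗ k` are the degrees of the
generators of `F` (`MGFR.exists_deg_of_hnz`, `MGFR.hnz_deg`). Conversely, if
`Tor_i(M, k)_j = 0` computed by `K`, then dimension shifting along `F` writes every element of degree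
`j` of `F i` as an element of `R₊ F i` plus a boundary, which again lies in `R₊ F i`; so `F i` has no
generator of degree `j` (`bdry_of_vt`, `MGFR.deg_ne_of_vt`). When `J = R` everything over `S` is
zero, and this case is treated separately.
-/

open Finset

section PaperRegularity

/-! ## Graded rings, graded modules, and a concrete (Koszul/Čech) model of graded local
cohomology, used to express the invariants `a_i(M)` and `reg(M)` of Castelnuovo–Mumford
regularity theory. -/

/-- Degrees, with `−∞` (for vanishing modules) and `+∞`. -/
abbrev Deg : Type := WithBot (WithTop ℤ)

/-- The canonical inclusion of `ℤ` into `Deg`. -/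
def Deg.of (j : ℤ) : Deg := ((j : WithTop ℤ) : Deg)

variable {S : Type} [CommRing S]

/-- `𝒜` is a (ℤ-indexed, nonnegatively supported) standard grading on the ring `S`:
`S = ⊕ 𝒜_i`, `1 ∈ 𝒜_0`, `𝒜_i · 𝒜_j ⊆ 𝒜_{i+j}`, `𝒜_i = 0` for `i < 0`, and `S` is
generated in degree one: `𝒜_{i+1} = 𝒜_1 · 𝒜_i`. -/
structure IsStdGraded (𝒜 : ℤ → AddSubgroup S) : Prop where
  internal : DirectSum.IsInternal 𝒜
  one_mem : (1 : S) ∈ 𝒜 0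
  mul_mem : ∀ {i j : ℤ} {a b : S}, a ∈ 𝒜 i → b ∈ 𝒜 j → a * b ∈ 𝒜 (i + j)
  bot_of_neg : ∀ i < (0 : ℤ), 𝒜 i = ⊥
  gen_one : ∀ i : ℤ, 0 ≤ i → ∀ a ∈ 𝒜 (i + 1),
    a ∈ AddSubgroup.closure {y : S | ∃ s ∈ 𝒜 1, ∃ b ∈ 𝒜 i, y = s * b}

/-- `S` is a standard graded ring *over* `R₀` (via the algebra structure):
the degree-zero part is exactly the image of `R₀`. -/
def GradedOver (𝒜 : ℤ → AddSubgroup S) (R₀ : Type) [CommRing R₀] [Algebra R₀ S] : Prop :=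
  Function.Injective (algebraMap R₀ S) ∧ (𝒜 0 : Set S) = Set.range (algebraMap R₀ S)

/-- `ℳ` is a grading on the `S`-module `M`, compatible with the grading `𝒜` of `S`. -/
structure IsGradedMod (𝒜 : ℤ → AddSubgroup S) {M : Type} [AddCommGroup M] [Module S M]
    (ℳ : ℤ → AddSubgroup M) : Prop where
  internal : DirectSum.IsInternal ℳ
  smul_mem : ∀ {i j : ℤ} {s : S} {m : M}, s ∈ 𝒜 i → m ∈ ℳ j → s • m ∈ ℳ (i + j)

/-- `x : Fin n → S` is a family of degree-one elements generating `𝒜 1` (hence generating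
the irrelevant ideal `S₊` up to radical). -/
def GensDegOne (𝒜 : ℤ → AddSubgroup S) {n : ℕ} (x : Fin n → S) : Prop :=
  (∀ i, x i ∈ 𝒜 1) ∧
    ∀ s ∈ 𝒜 1, s ∈ AddSubgroup.closure {y : S | ∃ r ∈ 𝒜 0, ∃ i, y = r * x i}

/-- The irrelevant ideal `S₊ = ⊕_{i>0} 𝒜_i` of a graded ring. -/
def sPlus (𝒜 : ℤ → AddSubgroup S) : Ideal S :=
  Ideal.span {s : S | ∃ i : ℤ, 0 < i ∧ s ∈ 𝒜 i}

/-- The induced grading on a quotient module `M ⧸ P` (images of the graded pieces). -/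
def qmPiece {M : Type} [AddCommGroup M] [Module S M] (P : Submodule S M)
    (ℳ : ℤ → AddSubgroup M) (j : ℤ) : AddSubgroup (M ⧸ P) :=
  AddSubgroup.map (P.mkQ).toAddMonoidHom (ℳ j)

section Koszul

variable {M : Type} [AddCommGroup M] [Module S M] {n : ℕ}

/-- Cochains of the (exponent `t`) Koszul cocomplex on `x_1^t, …, x_n^t` with values in `M`. -/
abbrev KCochain (M : Type) (n i : ℕ) : Type := {T : Finset (Fin n) // T.card = i} → M

/-- The Koszul codifferential (for the sequence `x_1^t, …, x_n^t`). -/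
noncomputable def kd (x : Fin n → S) (t i : ℕ) (z : KCochain M n i) : KCochain M n (i + 1) :=
  fun T => ∑ s ∈ T.1.attach,
    ((-1 : ℤ) ^ ((T.1.filter (fun a => a < s.1)).card)) •
      ((x s.1 ^ t) • z ⟨T.1.erase s.1, by
        rw [Finset.card_erase_of_mem s.2, T.2]; rfl⟩)

/-- The transition map from the exponent `t` Koszul cocomplex to the exponent `t + u` one. -/
noncomputable def kpush (x : Fin n → S) (u i : ℕ) (z : KCochain M n i) : KCochain M n i :=
  fun T => (∏ s ∈ T.1, x s ^ u) • z T

/-- `z` is a coboundary in the exponent `t` Koszul cocomplex. -/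
def kIsCobound (x : Fin n → S) (t : ℕ) : ∀ i, KCochain M n i → Prop
  | 0, z => z = 0
  | i + 1, z => ∃ w : KCochain M n i, kd x t i w = z

/-- `z` lies in the internal degree `j` strand of the exponent `t` Koszul cocomplex
(in cohomological degree `i`), for the grading `ℳ` of `M`. -/
def kStrand (ℳ : ℤ → AddSubgroup M) (t i : ℕ) (j : ℤ) (z : KCochain M n i) : Prop :=
  ∀ T, z T ∈ ℳ (j + (t * i : ℕ))

/-- Nonvanishing of the degree `j` part of the `i`-th graded local cohomology module
`H^i_{S₊}(M)_j`, computed as the direct limit over `t` of the Koszul cohomologies of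
`x_1^t, …, x_n^t`: there is a degree `j` cocycle whose class survives in the colimit. -/
def lcNZ (x : Fin n → S) (ℳ : ℤ → AddSubgroup M) (i : ℕ) (j : ℤ) : Prop :=
  ∃ (t : ℕ) (z : KCochain M n i), kStrand ℳ t i j z ∧ kd x t i z = 0 ∧
    ∀ u : ℕ, ¬ kIsCobound x (t + u) i (kpush x u i z)

/-- `a_i(M)`: the top degree of the `i`-th local cohomology of `M` (`⊥` if it vanishes). -/
noncomputable def aVal (x : Fin n → S) (ℳ : ℤ → AddSubgroup M) (i : ℕ) : Deg :=
  sSup {d : Deg | ∃ j : ℤ, lcNZ x ℳ i j ∧ d = Deg.of j}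

/-- The Castelnuovo–Mumford regularity `reg M = max_i (a_i(M) + i)`. -/
noncomputable def regVal (x : Fin n → S) (ℳ : ℤ → AddSubgroup M) : Deg :=
  sSup {d : Deg | ∃ (i : ℕ) (j : ℤ), lcNZ x ℳ i j ∧ d = Deg.of (j + i)}

end Koszul

/-- A (bounded-below, homologically indexed) complex of finitely generated graded free
`S`-modules `F_i = ⊕_{a : Fin (r i)} S(-deg i a)`, recorded via its matrices: the entry
`mat i a b ∈ S` is the coefficient of the `b`-th basis vector of `F_i` in the image of the
`a`-th basis vector of `F_{i+1}`; entries are homogeneous of the appropriate degrees. -/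
structure GFC (𝒜 : ℤ → AddSubgroup S) where
  r : ℕ → ℕ
  deg : ∀ i, Fin (r i) → ℤ
  mat : ∀ i, Fin (r (i + 1)) → Fin (r i) → S
  mat_mem : ∀ i a b, mat i a b ∈ 𝒜 (deg (i + 1) a - deg i b)
  comp_eq_zero : ∀ i (a : Fin (r (i + 2))) (c : Fin (r i)),
    ∑ b, mat i b c * mat (i + 1) a b = 0

/-- A minimal graded free resolution of the graded `S`-module `M` (with grading `ℳ`):
a graded free complex `F_•` together with an augmentation `F_0 → M` which is surjective,
exact, and minimal (all entries of the differentials lie in the maximal graded ideal;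
`m0` is the set of degree-zero elements lying in the maximal ideal of `S_0`). -/
structure MGFR (𝒜 : ℤ → AddSubgroup S) {M : Type} [AddCommGroup M] [Module S M]
    (ℳ : ℤ → AddSubgroup M) (m0 : Set S) extends GFC 𝒜 where
  augm : Fin (r 0) → M
  augm_mem : ∀ a, augm a ∈ ℳ (deg 0 a)
  augm_surj : ∀ m : M, ∃ z : Fin (r 0) → S, ∑ a, z a • augm a = m
  exact_zero : ∀ z : Fin (r 0) → S, (∑ a, z a • augm a = 0) ↔
    ∃ w : Fin (r 1) → S, (fun b => ∑ a, mat 0 a b * w a) = z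
  exact_succ : ∀ i (z : Fin (r (i + 1)) → S),
    ((fun b => ∑ a, mat i a b * z a) = (0 : Fin (r i) → S)) ↔
      ∃ w : Fin (r (i + 2)) → S, (fun c => ∑ a, mat (i + 1) a c * w a) = z
  minimal : ∀ i a b, deg (i + 1) a = deg i b → mat i a b ∈ m0

namespace GFC

variable {𝒜 : ℤ → AddSubgroup S} (F : GFC 𝒜)
variable (N : Type) [AddCommGroup N] [Module S N]

/-- The complex `F_• ⊗_S N`, in homological degree `i`. -/
noncomputable def tmap (i : ℕ) : ((Fin (F.r (i + 1)) → N) →ₗ[S] (Fin (F.r i) → N)) where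
  toFun z := fun b => ∑ a, F.mat i a b • z a
  map_add' y z := by
    funext b
    simp only [Pi.add_apply, smul_add]
    exact Finset.sum_add_distrib
  map_smul' s z := by
    funext b
    simp only [Pi.smul_apply, RingHom.id_apply]
    rw [Finset.smul_sum]
    exact Finset.sum_congr rfl fun a _ => smul_comm (F.mat i a b) s (z a)

/-- Cycles of the complex `F_• ⊗_S N`. -/
noncomputable def cyc : ∀ i : ℕ, Submodule S (Fin (F.r i) → N)
  | 0 => ⊤
  | i + 1 => LinearMap.ker (F.tmap N i)

/-- Boundaries of the complex `F_• ⊗_S N`. -/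
noncomputable def bdry (i : ℕ) : Submodule S (Fin (F.r i) → N) :=
  LinearMap.range (F.tmap N i)

/-- The homology `H_i(F_• ⊗_S N)` (e.g. `Tor_i^S(M, N)` when `F` is a resolution of `M`). -/
noncomputable def H (i : ℕ) : Type :=
  (F.cyc N i) ⧸ (Submodule.comap (F.cyc N i).subtype (F.bdry N i))

noncomputable instance (i : ℕ) : AddCommGroup (F.H N i) :=
  inferInstanceAs (AddCommGroup ((F.cyc N i) ⧸ (Submodule.comap (F.cyc N i).subtype (F.bdry N i))))

noncomputable instance (i : ℕ) : Module S (F.H N i) :=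
  inferInstanceAs (Module S ((F.cyc N i) ⧸ (Submodule.comap (F.cyc N i).subtype (F.bdry N i))))

/-- The internal degree `j` part of `F_i ⊗_S N`, for a grading `𝒩` of `N`. -/
def fpiece (𝒩 : ℤ → AddSubgroup N) (i : ℕ) (j : ℤ) : AddSubgroup (Fin (F.r i) → N) :=
  AddSubgroup.pi Set.univ (fun a => 𝒩 (j - F.deg i a))

/-- The induced grading on the homology `H_i(F_• ⊗_S N)`. -/
noncomputable def Hpiece (𝒩 : ℤ → AddSubgroup N) (i : ℕ) (j : ℤ) : AddSubgroup (F.H N i) :=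
  AddSubgroup.map
    ((Submodule.mkQ (Submodule.comap (F.cyc N i).subtype (F.bdry N i))).toAddMonoidHom)
    (AddSubgroup.comap ((F.cyc N i).subtype).toAddMonoidHom (F.fpiece N 𝒩 i j))

/-- Nonvanishing of the degree `j` part of `H_i(F_• ⊗_S N)` (e.g. of `Tor_i^S(M, N)_j`). -/
noncomputable def HNZ (𝒩 : ℤ → AddSubgroup N) (i : ℕ) (j : ℤ) : Prop :=
  F.Hpiece N 𝒩 i j ≠ ⊥

end GFC

/-- The dimension of the support of an `S`-module. -/
noncomputable def mdim (S : Type) [CommRing S] (X : Type) [AddCommGroup X] [Module S X] :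
    WithBot (WithTop ℕ) :=
  ringKrullDim (S ⧸ Module.annihilator S X)

end PaperRegularity

/-- The standard grading of the polynomial ring `k[X_1, …, X_N]`, extended by zero to
negative degrees. -/
noncomputable def polyGrading (k : Type) [CommRing k] (N : ℕ) :
    ℤ → AddSubgroup (MvPolynomial (Fin N) k) := fun j =>
  if 0 ≤ j then (MvPolynomial.homogeneousSubmodule (Fin N) k j.toNat).toAddSubgroup else ⊥

/-- The induced grading on the quotient ring `R/J` of a graded ring. -/
noncomputable def quotGrading {R : Type} [CommRing R] (𝒜 : ℤ → AddSubgroup R) (J : Ideal R)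
    (j : ℤ) : AddSubgroup (R ⧸ J) :=
  AddSubgroup.map (Ideal.Quotient.mk J).toAddMonoidHom (𝒜 j)

section ChangeOfRings

/-! ### Families of subgroups graded by the integers -/

/-- A homogeneous preimage can be chosen for a homogeneous element in the image of a
degree-preserving map. -/
theorem graded_lift {X Y : Type} [AddCommGroup X] [AddCommGroup Y] {𝒳 : ℤ → AddSubgroup X}
    {𝒴 : ℤ → AddSubgroup Y} (hX : iSup 𝒳 = ⊤) (hY : iSupIndep 𝒴) (f : X →+ Y)
    (hf : ∀ j, ∀ x ∈ 𝒳 j, f x ∈ 𝒴 j) {j : ℤ} (x : X) (hx : f x ∈ 𝒴 j) :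
    ∃ x' ∈ 𝒳 j, f x' = f x := by
  have hx' : x ∈ 𝒳 j ⊔ ⨆ (d) (_ : d ≠ j), 𝒳 d := by
    rw [← iSup_split_single, hX]; trivial
  obtain ⟨u, hu, v, hv, rfl⟩ := AddSubgroup.mem_sup.1 hx'
  refine ⟨u, hu, ?_⟩
  have hfv : f v ∈ ⨆ (d) (_ : d ≠ j), 𝒴 d := by
    have : (⨆ (d) (_ : d ≠ j), 𝒳 d) ≤ (⨆ (d) (_ : d ≠ j), 𝒴 d).comap f :=
      iSup₂_le fun d hd y hy =>
        (le_iSup₂ (f := fun d (_ : d ≠ j) => 𝒴 d) d hd) (hf d y hy)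
    exact this hv
  have hfv' : f v ∈ 𝒴 j := by
    have := (𝒴 j).sub_mem hx (hf j u hu)
    rwa [map_add, add_sub_cancel_left] at this
  have := (AddSubgroup.disjoint_def.1 (hY j)) hfv' hfv
  rw [map_add, this, add_zero]

/-- The kernel of a degree-preserving map is generated by its homogeneous elements. -/
theorem ker_le_closure {X Y : Type} [AddCommGroup X] [AddCommGroup Y] {𝒳 : ℤ → AddSubgroup X}
    {𝒴 : ℤ → AddSubgroup Y} (hX : iSup 𝒳 = ⊤) (hY : iSupIndep 𝒴) (f : X →+ Y)
    (hf : ∀ j, ∀ x ∈ 𝒳 j, f x ∈ 𝒴 j) (x : X) (hx : f x = 0) :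
    x ∈ AddSubgroup.closure {y : X | f y = 0 ∧ ∃ e, y ∈ 𝒳 e} := by
  classical
  have hx' : x ∈ iSup fun e => (𝒳 e).toAddSubmonoid := by
    refine AddSubgroup.iSup_induction 𝒳 (C := fun x => x ∈ iSup fun e => (𝒳 e).toAddSubmonoid)
      (hX ▸ AddSubgroup.mem_top x) (fun e y hy => ?_) (zero_mem _) (fun _ _ => add_mem)
    exact le_iSup (fun e => (𝒳 e).toAddSubmonoid) e hy
  obtain ⟨g, rfl⟩ := (AddSubmonoid.mem_iSup_iff_exists_dfinsupp' _ x).1 hx'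
  rw [DFinsupp.sum] at hx ⊢
  refine sum_mem fun e he => AddSubgroup.subset_closure ⟨?_, e, (g e).2⟩
  rw [map_sum, ← Finset.add_sum_erase _ _ he] at hx
  refine (AddSubgroup.disjoint_def.1 (hY e)) (hf e _ (g e).2) ?_
  rw [eq_neg_of_add_eq_zero_left hx]
  refine neg_mem (sum_mem fun d hd => ?_)
  exact (le_iSup₂ (f := fun d (_ : d ≠ e) => 𝒴 d) d (Finset.ne_of_mem_erase hd))
    (hf d _ (g d).2)

/-- The grading on `⊕ₐ X(-deg a)`. -/
def piPiece {X : Type} [AddCommGroup X] {r : ℕ} (deg : Fin r → ℤ) (𝒳 : ℤ → AddSubgroup X)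
    (j : ℤ) : AddSubgroup (Fin r → X) :=
  AddSubgroup.pi Set.univ fun a => 𝒳 (j - deg a)

theorem mem_piPiece {X : Type} [AddCommGroup X] {r : ℕ} {deg : Fin r → ℤ}
    {𝒳 : ℤ → AddSubgroup X} {j : ℤ} {z : Fin r → X} :
    z ∈ piPiece deg 𝒳 j ↔ ∀ a, z a ∈ 𝒳 (j - deg a) := by
  simp [piPiece, AddSubgroup.mem_pi]

theorem iSup_piPiece {X : Type} [AddCommGroup X] {r : ℕ} (deg : Fin r → ℤ)
    {𝒳 : ℤ → AddSubgroup X} (hX : iSup 𝒳 = ⊤) : iSup (piPiece deg 𝒳) = ⊤ := by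
  rw [eq_top_iff]
  intro z _
  rw [← Finset.univ_sum_single z]
  refine sum_mem fun a _ => ?_
  have : iSup 𝒳 ≤ (iSup (piPiece deg 𝒳)).comap (AddMonoidHom.single (fun _ : Fin r => X) a) := by
    refine iSup_le fun e y hy => ?_
    refine (le_iSup (piPiece deg 𝒳) (e + deg a)) (mem_piPiece.2 fun b => ?_)
    rcases eq_or_ne b a with rfl | hb
    · simpa using hy
    · simp [Pi.single_eq_of_ne hb, zero_mem]
  exact this (by rw [hX]; trivial)

theorem iSupIndep_piPiece {X : Type} [AddCommGroup X] {r : ℕ} (deg : Fin r → ℤ)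
    {𝒳 : ℤ → AddSubgroup X} (hX : iSupIndep 𝒳) : iSupIndep (piPiece deg 𝒳) := by
  intro j
  rw [AddSubgroup.disjoint_def]
  intro z hz hz'
  funext a
  refine (AddSubgroup.disjoint_def.1 (hX (j - deg a))) (mem_piPiece.1 hz a) ?_
  have : (⨆ (d) (_ : d ≠ j), piPiece deg 𝒳 d) ≤
      (⨆ (d) (_ : d ≠ j - deg a), 𝒳 d).comap (Pi.evalAddMonoidHom (fun _ : Fin r => X) a) :=
    iSup₂_le fun d hd y hy =>
      (le_iSup₂ (f := fun d (_ : d ≠ j - deg a) => 𝒳 d) (d - deg a) (by omega))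
        (mem_piPiece.1 hy a)
  exact this hz'

/-! ### Vanishing of graded homology of a free complex with coefficients -/

/-- A module over `R` with a family of pieces compatible with the grading of `R`. The pieces
are not required to span, or to be independent. -/
structure GMod {R : Type} [CommRing R] (𝒜 : ℤ → AddSubgroup R) where
  X : Type
  [ag : AddCommGroup X]
  [mod : Module R X]
  pc : ℤ → AddSubgroup X
  smul_mem : ∀ {i j : ℤ} {s : R} {m : X}, s ∈ 𝒜 i → m ∈ pc j → s • m ∈ pc (i + j)

attribute [instance] GMod.ag GMod.mod

variable {R : Type} [CommRing R] {𝒜 : ℤ → AddSubgroup R}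

theorem GFC.tmap_apply (K : GFC 𝒜) (X : Type) [AddCommGroup X] [Module R X] (i : ℕ)
    (z : Fin (K.r (i + 1)) → X) (b : Fin (K.r i)) :
    K.tmap X i z b = ∑ a, K.mat i a b • z a := rfl

theorem GFC.mem_fpiece (K : GFC 𝒜) {X : Type} [AddCommGroup X] [Module R X]
    {𝒳 : ℤ → AddSubgroup X} {i : ℕ} {j : ℤ} {z : Fin (K.r i) → X} :
    z ∈ K.fpiece X 𝒳 i j ↔ ∀ a, z a ∈ 𝒳 (j - K.deg i a) := mem_piPiece

theorem GFC.tmap_tmap (K : GFC 𝒜) (X : Type) [AddCommGroup X] [Module R X] (i : ℕ)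
    (z : Fin (K.r (i + 2)) → X) : K.tmap X i (K.tmap X (i + 1) z) = 0 := by
  funext c
  simp only [GFC.tmap_apply, Finset.smul_sum, smul_smul, Pi.zero_apply]
  rw [Finset.sum_comm]
  refine Finset.sum_eq_zero fun a _ => ?_
  rw [← Finset.sum_smul, K.comp_eq_zero, zero_smul]

theorem GFC.tmap_mem (K : GFC 𝒜) (X : GMod 𝒜) {i : ℕ} {j : ℤ} {z : Fin (K.r (i + 1)) → X.X}
    (hz : z ∈ K.fpiece X.X X.pc (i + 1) j) : K.tmap X.X i z ∈ K.fpiece X.X X.pc i j := by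
  rw [GFC.mem_fpiece] at hz ⊢
  intro b
  rw [GFC.tmap_apply]
  refine sum_mem fun a _ => ?_
  have := X.smul_mem (K.mat_mem i a b) (hz a)
  convert this using 2
  ring

theorem GFC.tmap_map (K : GFC 𝒜) {X Y : Type} [AddCommGroup X] [Module R X] [AddCommGroup Y]
    [Module R Y] (f : X →ₗ[R] Y) (i : ℕ) (z : Fin (K.r (i + 1)) → X) :
    K.tmap Y i (fun a => f (z a)) = fun b => f (K.tmap X i z b) := by
  funext b
  simp [GFC.tmap_apply, map_sum]

/-- The degree `j` strand of `K ⊗ X` is exact in homological degree `i`. When `K` resolves the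
residue field this is the vanishing of `Tor_i(X, k)_j`. -/
def VT (K : GFC 𝒜) (X : GMod 𝒜) (i : ℕ) (j : ℤ) : Prop :=
  ∀ z ∈ K.fpiece X.X X.pc i j, z ∈ K.cyc X.X i →
    ∃ w ∈ K.fpiece X.X X.pc (i + 1) j, K.tmap X.X i w = z

theorem VT_of_subsingleton (K : GFC 𝒜) (X : GMod 𝒜) [Subsingleton X.X] (i : ℕ) (j : ℤ) :
    VT K X i j := fun _ _ _ => ⟨0, zero_mem _, Subsingleton.elim _ _⟩

/-- A degree-preserving short exact sequence `0 → X' → G → X → 0`, exact on each piece. -/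
structure GSES (X' G X : GMod 𝒜) where
  ι : X'.X →ₗ[R] G.X
  π : G.X →ₗ[R] X.X
  inj : Function.Injective ι
  ι_mem : ∀ {j : ℤ} {x : X'.X}, x ∈ X'.pc j → ι x ∈ G.pc j
  π_mem : ∀ {j : ℤ} {x : G.X}, x ∈ G.pc j → π x ∈ X.pc j
  comp : ∀ x, π (ι x) = 0
  surj : ∀ {j : ℤ} {x : X.X}, x ∈ X.pc j → ∃ g ∈ G.pc j, π g = x
  exact : ∀ {j : ℤ} {g : G.X}, g ∈ G.pc j → π g = 0 → ∃ x ∈ X'.pc j, ι x = g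

namespace GSES

variable {X' G X : GMod 𝒜} (E : GSES X' G X) (K : GFC 𝒜)
include E

theorem lift_surj {i : ℕ} {j : ℤ} {z : Fin (K.r i) → X.X} (hz : z ∈ K.fpiece X.X X.pc i j) :
    ∃ g ∈ K.fpiece G.X G.pc i j, (fun a => E.π (g a)) = z := by
  rw [GFC.mem_fpiece] at hz
  choose g hg hg' using fun a => E.surj (hz a)
  exact ⟨g, GFC.mem_fpiece K |>.2 hg, funext hg'⟩

theorem lift_ker {i : ℕ} {j : ℤ} {g : Fin (K.r i) → G.X} (hg : g ∈ K.fpiece G.X G.pc i j)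
    (h0 : (fun a => E.π (g a)) = 0) :
    ∃ x ∈ K.fpiece X'.X X'.pc i j, (fun a => E.ι (x a)) = g := by
  rw [GFC.mem_fpiece] at hg
  choose x hx hx' using fun a => E.exact (hg a) (congrFun h0 a)
  exact ⟨x, GFC.mem_fpiece K |>.2 hx, funext hx'⟩

/-- Right exactness in homological degree zero. -/
theorem vt_zero {j : ℤ} (hG : VT K G 0 j) : VT K X 0 j := by
  intro z hz _
  obtain ⟨g, hg, rfl⟩ := E.lift_surj K hz
  obtain ⟨w, hw, rfl⟩ := hG g hg trivial
  refine ⟨fun a => E.π (w a), ?_, GFC.tmap_map K E.π 0 w⟩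
  exact (GFC.mem_fpiece K).2 fun a => E.π_mem ((GFC.mem_fpiece K).1 hw a)

/-- Exactness of the long exact sequence at `Tor_{i+1}(X)`. -/
theorem vt_succ {i : ℕ} {j : ℤ} (hG : VT K G (i + 1) j) (hX' : VT K X' i j) :
    VT K X (i + 1) j := by
  intro z hz hcyc
  obtain ⟨g, hg, rfl⟩ := E.lift_surj K hz
  have hcyc : K.tmap X.X i (fun a => E.π (g a)) = 0 := hcyc
  rw [GFC.tmap_map] at hcyc
  obtain ⟨x, hx, hxg⟩ := E.lift_ker K (K.tmap_mem G hg) hcyc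
  have hxc : x ∈ K.cyc X'.X i := by
    cases i with
    | zero => trivial
    | succ i =>
      change K.tmap X'.X i x = 0
      have h := K.tmap_tmap G.X i g
      rw [← hxg, GFC.tmap_map] at h
      funext a
      exact E.inj ((congrFun h a).trans (map_zero E.ι).symm)
  obtain ⟨w, hw, rfl⟩ := hX' x hx hxc
  rw [← GFC.tmap_map] at hxg
  have hιw : (fun a => E.ι (w a)) ∈ K.fpiece G.X G.pc (i + 1) j :=
    (GFC.mem_fpiece K).2 fun a => E.ι_mem ((GFC.mem_fpiece K).1 hw a)
  obtain ⟨u, hu, hu'⟩ := hG (g - fun a => E.ι (w a)) (sub_mem hg hιw) (by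
    change K.tmap G.X i _ = 0
    rw [map_sub, hxg, sub_self])
  refine ⟨fun a => E.π (u a), ?_, ?_⟩
  · exact (GFC.mem_fpiece K).2 fun a => E.π_mem ((GFC.mem_fpiece K).1 hu a)
  · rw [GFC.tmap_map, hu']
    funext a
    simp [E.comp]

/-- Dimension shifting: if `Tor_{i+1}(X)_j = 0` and `Tor_i(X')_j → Tor_i(G)_j` is zero, then
`Tor_i(X')_j = 0`. -/
theorem vt_shift {i : ℕ} {j : ℤ} (hX : VT K X (i + 1) j)
    (hG : ∀ z ∈ K.fpiece X'.X X'.pc i j, z ∈ K.cyc X'.X i →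
      ∃ w ∈ K.fpiece G.X G.pc (i + 1) j, K.tmap G.X i w = fun a => E.ι (z a)) :
    VT K X' i j := by
  intro z hz hcyc
  obtain ⟨g, hg, hgz⟩ := hG z hz hcyc
  obtain ⟨u, hu, hu'⟩ := hX (fun a => E.π (g a))
    ((GFC.mem_fpiece K).2 fun a => E.π_mem ((GFC.mem_fpiece K).1 hg a)) (by
      change K.tmap X.X i _ = 0
      rw [GFC.tmap_map, hgz]
      funext a
      simp [E.comp])
  obtain ⟨v, hv, rfl⟩ := E.lift_surj K hu
  rw [GFC.tmap_map] at hu'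
  obtain ⟨x, hx, hxg⟩ := E.lift_ker K (sub_mem hg (K.tmap_mem G hv)) (by
    funext a
    have := congrFun hu' a
    simp only [Pi.sub_apply, map_sub, Pi.zero_apply]
    rw [this, sub_self])
  refine ⟨x, hx, ?_⟩
  have h : K.tmap G.X i (fun a => E.ι (x a)) = fun a => E.ι (z a) := by
    rw [hxg, map_sub, K.tmap_tmap, sub_zero, hgz]
  rw [GFC.tmap_map] at h
  funext a
  exact E.inj (congrFun h a)

end GSES

/-! ### Resolutions by graded modules -/

/-- An exact augmented complex `⋯ → C 1 → C 0 → X → 0`, exact on each graded piece. -/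
structure GRes (X : GMod 𝒜) where
  C : ℕ → GMod 𝒜
  d : ∀ p, (C (p + 1)).X →ₗ[R] (C p).X
  ε : (C 0).X →ₗ[R] X.X
  d_mem : ∀ p {j : ℤ} {x : (C (p + 1)).X}, x ∈ (C (p + 1)).pc j → d p x ∈ (C p).pc j
  ε_mem : ∀ {j : ℤ} {x : (C 0).X}, x ∈ (C 0).pc j → ε x ∈ X.pc j
  ε_d : ∀ x, ε (d 0 x) = 0
  d_d : ∀ p x, d p (d (p + 1) x) = 0
  surj : ∀ {j : ℤ} {x : X.X}, x ∈ X.pc j → ∃ c ∈ (C 0).pc j, ε c = x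
  exact_zero : ∀ {j : ℤ} {c : (C 0).X}, c ∈ (C 0).pc j → ε c = 0 →
    ∃ c' ∈ (C 1).pc j, d 0 c' = c
  exact_succ : ∀ p {j : ℤ} {c : (C (p + 1)).X}, c ∈ (C (p + 1)).pc j → d p c = 0 →
    ∃ c' ∈ (C (p + 2)).pc j, d (p + 1) c' = c

namespace GRes

variable {X : GMod 𝒜} (P : GRes X)

/-- The first syzygy module of a resolution, with its induced grading. -/
def syz : GMod 𝒜 where
  X := LinearMap.ker P.ε
  pc j := ((P.C 0).pc j).comap (LinearMap.ker P.ε).subtype.toAddMonoidHom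
  smul_mem hs hm := (P.C 0).smul_mem hs hm

/-- The sequence `0 → syz → C 0 → X → 0`. -/
def ses : GSES P.syz (P.C 0) X where
  ι := (LinearMap.ker P.ε).subtype
  π := P.ε
  inj := Subtype.val_injective
  ι_mem h := h
  π_mem := P.ε_mem
  comp x := x.2
  surj := P.surj
  exact {_ g} hg h0 := ⟨⟨g, h0⟩, hg, rfl⟩

/-- The truncated resolution of the first syzygy module. -/
def shift : GRes P.syz where
  C p := P.C (p + 1)
  d p := P.d (p + 1)
  ε := (P.d 0).codRestrict (LinearMap.ker P.ε) P.ε_d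
  d_mem p := P.d_mem (p + 1)
  ε_mem h := P.d_mem 0 h
  ε_d x := Subtype.ext (P.d_d 0 x)
  d_d p := P.d_d (p + 1)
  surj {j x} hx := by
    obtain ⟨c, hc, h⟩ := P.exact_zero (j := j) (c := x.1) hx x.2
    exact ⟨c, hc, Subtype.ext h⟩
  exact_zero hc h := P.exact_succ 0 hc (congrArg Subtype.val h)
  exact_succ p _ _ hc h := P.exact_succ (p + 1) hc h

end GRes

/-- If `Tor_{i-p}(C p)_j = 0` for all `p ≤ i`, then `Tor_i(X)_j = 0`. -/
theorem vt_of_res (K : GFC 𝒜) (j : ℤ) (i : ℕ) : ∀ {X : GMod 𝒜} (P : GRes X),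
    (∀ p q, p + q = i → VT K (P.C p) q j) → VT K X i j := by
  induction i with
  | zero => exact fun P h => P.ses.vt_zero K (h 0 0 rfl)
  | succ i ih =>
    intro X P h
    exact P.ses.vt_succ K (h 0 (i + 1) (by omega))
      (ih P.shift fun p q hpq => h (p + 1) q (by omega))

/-- If the terms `C p` are acyclic and the differentials vanish after tensoring with the residue
field, then the vanishing of `Tor_i(X)_j` propagates to `C i`: in degree `j`, every element of
`C i` is the sum of an element of `R₊ (C i)` and of a boundary. -/
theorem bdry_of_vt (K : GFC 𝒜) (j : ℤ) (i : ℕ) : ∀ {X : GMod 𝒜} (P : GRes X),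
    (∀ p q, VT K (P.C p) (q + 1) j) →
    (∀ p, ∀ w ∈ K.fpiece (P.C (p + 1)).X (P.C (p + 1)).pc 0 j,
      ∃ u ∈ K.fpiece (P.C p).X (P.C p).pc 1 j, K.tmap (P.C p).X 0 u = fun a => P.d p (w a)) →
    VT K X i j →
    ∀ z ∈ K.fpiece (P.C i).X (P.C i).pc 0 j, ∃ u : Fin (K.r 1) → (P.C i).X,
      ∃ w : Fin (K.r 0) → (P.C (i + 1)).X, z = K.tmap (P.C i).X 0 u + fun a => P.d i (w a) := by
  induction i with
  | zero =>
    intro X P _ _ hX z hz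
    obtain ⟨u, hu, hu'⟩ := hX (fun a => P.ε (z a))
      ((GFC.mem_fpiece K).2 fun a => P.ε_mem ((GFC.mem_fpiece K).1 hz a)) trivial
    obtain ⟨v, hv, rfl⟩ := P.ses.lift_surj K hu
    obtain ⟨x, hx, hxg⟩ := P.ses.lift_ker K (sub_mem hz (K.tmap_mem (P.C 0) hv)) (by
      have hu' : K.tmap X.X 0 (fun a => P.ε (v a)) = fun a => P.ε (z a) := hu'
      rw [GFC.tmap_map] at hu'
      funext a
      have := congrFun hu' a
      change P.ε (z a - K.tmap (P.C 0).X 0 v a) = 0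
      rw [map_sub, this, sub_self])
    obtain ⟨w, _, rfl⟩ := P.shift.ses.lift_surj K hx
    exact ⟨v, w, by rw [← sub_eq_iff_eq_add']; exact hxg.symm⟩
  | succ i ih =>
    intro X P hC hmin hX z hz
    refine ih P.shift (fun p q => hC (p + 1) q) (fun p => hmin (p + 1)) ?_ z hz
    refine P.ses.vt_shift K hX fun y hy hcyc => ?_
    cases i with
    | zero =>
      obtain ⟨w, hw, rfl⟩ := P.shift.ses.lift_surj K hy
      exact hmin 0 w hw
    | succ i =>
      refine hC 0 i _ ((GFC.mem_fpiece K).2 fun a => (GFC.mem_fpiece K).1 hy a) ?_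
      change K.tmap (P.C 0).X i (fun a => P.ses.ι (y a)) = 0
      have hcyc : K.tmap P.syz.X i y = 0 := hcyc
      rw [GFC.tmap_map, hcyc]
      funext a
      exact map_zero P.ses.ι

/-! ### Coefficients in free modules -/

/-- The properties of a nonnegative grading of a ring that are used below. -/
structure GrRing {A : Type} [CommRing A] (𝒜 : ℤ → AddSubgroup A) : Prop where
  one_mem : (1 : A) ∈ 𝒜 0
  mul_mem : ∀ {i j : ℤ} {a b : A}, a ∈ 𝒜 i → b ∈ 𝒜 j → a * b ∈ 𝒜 (i + j)
  neg : ∀ i < (0 : ℤ), 𝒜 i = ⊥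
  indep : iSupIndep 𝒜
  top : iSup 𝒜 = ⊤

/-- Homogeneous elements of nonzero degree lie in the irrelevant ideal, the grading being
nonnegative. -/
theorem GrRing.mem_sPlus {A : Type} [CommRing A] {𝒜 : ℤ → AddSubgroup A} (h𝒜 : GrRing 𝒜)
    {i : ℤ} (hi : i ≠ 0) {s : A} (hs : s ∈ 𝒜 i) : s ∈ sPlus 𝒜 := by
  rcases lt_or_gt_of_ne hi with h | h
  · rw [h𝒜.neg i h] at hs
    rw [AddSubgroup.mem_bot.1 hs]
    exact zero_mem _
  · exact Ideal.subset_span ⟨i, h, hs⟩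

/-- The graded module `⊕ₐ X(-deg a)`. -/
def piGMod {r : ℕ} (deg : Fin r → ℤ) (X : GMod 𝒜) : GMod 𝒜 where
  X := Fin r → X.X
  pc := piPiece deg X.pc
  smul_mem {i j s m} hs hm := mem_piPiece.2 fun a => by
    have := X.smul_mem hs (mem_piPiece.1 hm a)
    rwa [← add_sub_assoc] at this

/-- A graded `R`-algebra as a graded `R`-module. -/
def algGMod {A : Type} [CommRing A] [Algebra R A] {ℬ : ℤ → AddSubgroup A} (hℬ : GrRing ℬ)
    (halg : ∀ (i : ℤ) (s : R), s ∈ 𝒜 i → algebraMap R A s ∈ ℬ i) : GMod 𝒜 where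
  X := A
  pc := ℬ
  smul_mem {i j s m} hs hm := by
    rw [Algebra.smul_def]
    exact hℬ.mul_mem (halg i s hs) hm

/-- The ring `R` as a graded module over itself. -/
def ringGMod (h𝒜 : GrRing 𝒜) : GMod 𝒜 := algGMod (A := R) h𝒜 fun _ _ h => h

/-- `Tor` commutes with finite sums of shifts. -/
theorem vt_pi (K : GFC 𝒜) {r : ℕ} (deg : Fin r → ℤ) (X : GMod 𝒜) (i : ℕ) (j : ℤ)
    (h : ∀ a, VT K X i (j - deg a)) : VT K (piGMod deg X) i j := by
  intro z hz hcyc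
  change Fin (K.r i) → Fin r → X.X at z
  have key : ∀ a, ∃ w ∈ K.fpiece X.X X.pc (i + 1) (j - deg a),
      K.tmap X.X i w = fun b => z b a := by
    intro a
    refine h a (fun b => z b a) ((GFC.mem_fpiece K).2 fun b => ?_) ?_
    · have := mem_piPiece.1 ((GFC.mem_fpiece K).1 hz b) a
      rwa [sub_right_comm] at this
    · cases i with
      | zero => trivial
      | succ i =>
        have hcyc : K.tmap (piGMod deg X).X i z = 0 := hcyc
        have := K.tmap_map (LinearMap.proj a : (Fin r → X.X) →ₗ[R] X.X) i z
        refine this.trans ?_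
        funext b
        exact congrFun (congrFun hcyc b) a
  choose w hw hw' using key
  refine ⟨fun b a => w a b, (GFC.mem_fpiece K).2 fun b => mem_piPiece.2 fun a => ?_, ?_⟩
  · have := (GFC.mem_fpiece K).1 (hw a) b
    rwa [sub_right_comm] at this
  · funext b a
    refine Eq.trans ?_ (congrFun (hw' a) b)
    exact (congrFun (K.tmap_map (LinearMap.proj a : (Fin r → X.X) →ₗ[R] X.X) i
      (fun b a => w a b)) b).symm

/-- `K` is a graded free resolution of `R ⧸ R₊`, all generators of `K₀` having degree `0`. -/
structure IsKRes (K : GFC 𝒜) : Prop where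
  deg0 : ∀ b, K.deg 0 b = 0
  ne : Nonempty (Fin (K.r 0))
  mat0 : ∀ a b, K.mat 0 a b ∈ sPlus 𝒜
  res0 : ∀ z : Fin (K.r 0) → R, (∀ b, z b ∈ sPlus 𝒜) → ∃ w, K.tmap R 0 w = z
  res : ∀ i z, K.tmap R i z = 0 → ∃ w, K.tmap R (i + 1) w = z

section

variable {K : GFC 𝒜} (hK : IsKRes K) (h𝒜 : GrRing 𝒜)
include hK h𝒜

omit hK in
/-- Homogeneous boundaries are boundaries of homogeneous elements of the same degree. -/
theorem tmap_lift (i : ℕ) (j : ℤ) (w : Fin (K.r (i + 1)) → R)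
    (hw : K.tmap R i w ∈ K.fpiece R 𝒜 i j) :
    ∃ w' ∈ K.fpiece R 𝒜 (i + 1) j, K.tmap R i w' = K.tmap R i w :=
  graded_lift (iSup_piPiece (K.deg (i + 1)) h𝒜.top) (iSupIndep_piPiece (K.deg i) h𝒜.indep)
    (K.tmap R i).toAddMonoidHom (fun _ _ hx => K.tmap_mem (ringGMod h𝒜) hx) w hw

/-- `Tor_{q+1}(R, k) = 0`. -/
theorem vt_ring_succ (q : ℕ) (j : ℤ) : VT K (ringGMod h𝒜) (q + 1) j := by
  intro z hz hcyc
  obtain ⟨w, hw⟩ := hK.res q z hcyc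
  obtain ⟨w', hw', h⟩ := tmap_lift h𝒜 (q + 1) j w (by rw [hw]; exact hz)
  exact ⟨w', hw', h.trans hw⟩

/-- `Tor_0(R, k) = R ⧸ R₊` is concentrated in degree `0`. -/
theorem vt_ring_zero {j : ℤ} (hj : j ≠ 0) : VT K (ringGMod h𝒜) 0 j := by
  intro z hz _
  obtain ⟨w, hw⟩ := hK.res0 z fun b => by
    have := (GFC.mem_fpiece K).1 hz b
    rw [hK.deg0, sub_zero] at this
    exact h𝒜.mem_sPlus hj this
  obtain ⟨w', hw', h⟩ := tmap_lift h𝒜 0 j w (by rw [hw]; exact hz)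
  exact ⟨w', hw', h.trans hw⟩

/-- A homogeneous element of `R₊ ⊕ₐ R(-deg a)` is a boundary of `K ⊗ ⊕ₐ R(-deg a)`. -/
theorem lift_pi_zero {r : ℕ} (deg : Fin r → ℤ) (j : ℤ) (z : Fin (K.r 0) → Fin r → R)
    (hz : ∀ b, z b ∈ piPiece deg 𝒜 (j - K.deg 0 b)) (hz' : ∀ b a, z b a ∈ sPlus 𝒜) :
    ∃ u ∈ K.fpiece (Fin r → R) (piPiece deg 𝒜) 1 j, K.tmap (Fin r → R) 0 u = z := by
  have key : ∀ a, ∃ w ∈ K.fpiece R 𝒜 1 (j - deg a), K.tmap R 0 w = fun b => z b a := by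
    intro a
    obtain ⟨w, hw⟩ := hK.res0 (fun b => z b a) fun b => hz' b a
    obtain ⟨w', hw', h⟩ := tmap_lift h𝒜 0 (j - deg a) w (by
      rw [hw]
      refine (GFC.mem_fpiece K).2 fun b => ?_
      have := mem_piPiece.1 (hz b) a
      rwa [sub_right_comm] at this)
    exact ⟨w', hw', h.trans hw⟩
  choose w hw hw' using key
  refine ⟨fun b a => w a b, (GFC.mem_fpiece K).2 fun b => mem_piPiece.2 fun a => ?_, ?_⟩
  · have := (GFC.mem_fpiece K).1 (hw a) b
    rwa [sub_right_comm] at this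
  · funext b a
    refine Eq.trans ?_ (congrFun (hw' a) b)
    exact (congrFun (K.tmap_map (LinearMap.proj a : (Fin r → R) →ₗ[R] R) 0
      (fun b a => w a b)) b).symm

end

/-! ### Minimal resolutions as graded exact complexes -/

section

variable {A : Type} [CommRing A] [Algebra R A] {ℬ : ℤ → AddSubgroup A}
  {M : Type} [AddCommGroup M] [Module R M] [Module A M] [IsScalarTower R A M]
  {ℳ : ℤ → AddSubgroup M}

/-- A graded `A`-module as a graded `R`-module. -/
def modGMod (halg : ∀ (i : ℤ) (s : R), s ∈ 𝒜 i → algebraMap R A s ∈ ℬ i)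
    (hM : ∀ {i j : ℤ} {s : A} {m : M}, s ∈ ℬ i → m ∈ ℳ j → s • m ∈ ℳ (i + j)) : GMod 𝒜 where
  X := M
  pc := ℳ
  smul_mem {i j s m} hs hm := by
    rw [← algebraMap_smul A s m]
    exact hM (halg i s hs) hm

/-- A graded free resolution over a graded `R`-algebra `A`, viewed as a complex of graded
`R`-modules. -/
noncomputable def MGFR.toGRes {m0 : Set A} (F : MGFR ℬ ℳ m0) (hℬ : GrRing ℬ)
    (halg : ∀ (i : ℤ) (s : R), s ∈ 𝒜 i → algebraMap R A s ∈ ℬ i)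
    (hM : ∀ {i j : ℤ} {s : A} {m : M}, s ∈ ℬ i → m ∈ ℳ j → s • m ∈ ℳ (i + j))
    (hind : iSupIndep ℳ) : GRes (modGMod (𝒜 := 𝒜) (ℳ := ℳ) halg hM) where
  C p := piGMod (F.deg p) (algGMod hℬ halg)
  d p := ((F.tmap A p).restrictScalars R : (Fin (F.r (p + 1)) → A) →ₗ[R] (Fin (F.r p) → A))
  ε := ((Fintype.linearCombination A F.augm).restrictScalars R : (Fin (F.r 0) → A) →ₗ[R] M)
  d_mem p _ _ hx := F.tmap_mem (ringGMod hℬ) hx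
  ε_mem {j x} hx := by
    change Fin (F.r 0) → A at x
    change ∑ a, x a • F.augm a ∈ ℳ j
    refine sum_mem fun a _ => ?_
    have := hM (mem_piPiece.1 hx a) (F.augm_mem a)
    rwa [sub_add_cancel] at this
  ε_d x := (F.exact_zero _).2 ⟨x, rfl⟩
  d_d p x := F.tmap_tmap A p x
  surj {j x} hx := by
    obtain ⟨z, rfl⟩ := F.augm_surj x
    refine graded_lift (iSup_piPiece (F.deg 0) hℬ.top) hind
      (Fintype.linearCombination A F.augm).toAddMonoidHom (fun j x hx => ?_) z hx
    change ∑ a, x a • F.augm a ∈ ℳ j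
    refine sum_mem fun a _ => ?_
    have := hM (mem_piPiece.1 hx a) (F.augm_mem a)
    rwa [sub_add_cancel] at this
  exact_zero {j c} hc h := by
    obtain ⟨w, rfl⟩ := (F.exact_zero c).1 h
    exact tmap_lift (K := F.toGFC) hℬ 0 j w hc
  exact_succ p {j c} hc h := by
    obtain ⟨w, rfl⟩ := (F.exact_succ p c).1 h
    exact tmap_lift (K := F.toGFC) hℬ (p + 1) j w hc

end

/-! ### A graded free resolution of the residue field -/

/-- A submodule generated by homogeneous elements is the row space of a degree-preserving matrix. -/
theorem exists_cover [IsNoetherianRing R] {r : ℕ} (deg : Fin r → ℤ)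
    (Z : Submodule R (Fin r → R))
    (hZ : Z ≤ Submodule.span R {z | z ∈ Z ∧ ∃ e, z ∈ piPiece deg 𝒜 e}) :
    ∃ (r' : ℕ) (deg' : Fin r' → ℤ) (mat : Fin r' → Fin r → R),
      (∀ a b, mat a b ∈ 𝒜 (deg' a - deg b)) ∧ Submodule.span R (Set.range mat) = Z := by
  have hZ' : Submodule.span R {z | z ∈ Z ∧ ∃ e, z ∈ piPiece deg 𝒜 e} = Z :=
    le_antisymm (Submodule.span_le.2 fun z hz => hz.1) hZ
  obtain ⟨s, hs, hs'⟩ := (Submodule.fg_span_iff_fg_span_finset_subset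
    {z | z ∈ Z ∧ ∃ e, z ∈ piPiece deg 𝒜 e}).1 (IsNoetherian.noetherian (R := R) (M := Fin r → R) _)
  choose e he using fun z : s => (hs z.2).2
  refine ⟨s.card, fun a => e (s.equivFin.symm a), fun a => (s.equivFin.symm a).1,
    fun a b => mem_piPiece.1 (he (s.equivFin.symm a)) b, ?_⟩
  rw [← hZ', hs']
  congr 1
  ext z
  constructor
  · rintro ⟨a, rfl⟩
    exact (s.equivFin.symm a).2
  · intro hz
    exact ⟨s.equivFin ⟨z, hz⟩, by simp⟩

/-- A degree-preserving matrix between finite graded free modules; `mat a` is the image of the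
`a`-th basis vector of the source. -/
structure Stage (𝒜 : ℤ → AddSubgroup R) where
  r : ℕ
  deg : Fin r → ℤ
  r' : ℕ
  deg' : Fin r' → ℤ
  mat : Fin r' → Fin r → R
  mem : ∀ a b, mat a b ∈ 𝒜 (deg' a - deg b)

theorem mem_span_range_iff {r r' : ℕ} (mat : Fin r' → Fin r → R) (z : Fin r → R) :
    z ∈ Submodule.span R (Set.range mat) ↔
      ∃ w : Fin r' → R, ∀ b, ∑ a, mat a b * w a = z b := by
  rw [Submodule.mem_span_range_iff_exists_fun]
  simp [funext_iff, Finset.sum_apply, mul_comm]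

theorem Stage.exists_next [IsNoetherianRing R] (h𝒜 : GrRing 𝒜) (s : Stage 𝒜) :
    ∃ (r' : ℕ) (deg' : Fin r' → ℤ) (mat : Fin r' → Fin s.r' → R),
      (∀ a b, mat a b ∈ 𝒜 (deg' a - s.deg' b)) ∧
        ∀ z : Fin s.r' → R, (∀ b, ∑ a, s.mat a b * z a = 0) ↔
          ∃ w : Fin r' → R, ∀ c, ∑ a, mat a c * w a = z c := by
  let f : (Fin s.r' → R) →ₗ[R] (Fin s.r → R) := Fintype.linearCombination R s.mat
  have hf : ∀ z b, f z b = ∑ a, s.mat a b * z a := fun z b => by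
    simp [f, Fintype.linearCombination_apply, Finset.sum_apply, mul_comm]
  have hf0 : ∀ z, z ∈ LinearMap.ker f ↔ ∀ b, ∑ a, s.mat a b * z a = 0 := fun z => by
    rw [LinearMap.mem_ker, funext_iff]
    simp only [hf, Pi.zero_apply]
  obtain ⟨r', deg', mat, hmem, hspan⟩ := exists_cover (𝒜 := 𝒜) s.deg' (LinearMap.ker f) (by
    intro z hz
    have := ker_le_closure (iSup_piPiece s.deg' h𝒜.top) (iSupIndep_piPiece s.deg h𝒜.indep)
      f.toAddMonoidHom (fun j x hx => mem_piPiece.2 fun b => ?_) z hz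
    · have hle : AddSubgroup.closure
          {y : Fin s.r' → R | f.toAddMonoidHom y = 0 ∧ ∃ e, y ∈ piPiece s.deg' 𝒜 e} ≤
          (Submodule.span R {z | z ∈ LinearMap.ker f ∧
            ∃ e, z ∈ piPiece s.deg' 𝒜 e}).toAddSubgroup :=
        (AddSubgroup.closure_le _).2 fun y hy => Submodule.subset_span hy
      exact hle this
    · change f x b ∈ _
      rw [hf]
      refine sum_mem fun a _ => ?_
      have := h𝒜.mul_mem (s.mem a b) (mem_piPiece.1 hx a)
      convert this using 2
      ring)
  exact ⟨r', deg', mat, hmem, fun z => by rw [← hf0, ← hspan, mem_span_range_iff]⟩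

/-- A matrix mapping onto the kernel of the given one. -/
noncomputable def Stage.next [IsNoetherianRing R] (h𝒜 : GrRing 𝒜) (s : Stage 𝒜) : Stage 𝒜 where
  r := s.r'
  deg := s.deg'
  r' := (s.exists_next h𝒜).choose
  deg' := (s.exists_next h𝒜).choose_spec.choose
  mat := (s.exists_next h𝒜).choose_spec.choose_spec.choose
  mem := (s.exists_next h𝒜).choose_spec.choose_spec.choose_spec.1

/-- Repeated covers of kernels, starting from a given matrix. -/
noncomputable def Stage.seq [IsNoetherianRing R] (h𝒜 : GrRing 𝒜) (s : Stage 𝒜) : ℕ → Stage 𝒜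
  | 0 => s
  | n + 1 => (Stage.seq h𝒜 s n).next h𝒜

theorem Stage.seq_exact [IsNoetherianRing R] (h𝒜 : GrRing 𝒜) (s : Stage 𝒜) (i : ℕ)
    (z : Fin (s.seq h𝒜 (i + 1)).r → R) :
    (∀ b, ∑ a : Fin (s.seq h𝒜 (i + 1)).r, (s.seq h𝒜 i).mat a b * z a = 0) ↔
      ∃ w : Fin (s.seq h𝒜 (i + 2)).r → R,
        ∀ c, ∑ a : Fin (s.seq h𝒜 (i + 2)).r, (s.seq h𝒜 (i + 1)).mat a c * w a = z c :=
  ((s.seq h𝒜 i).exists_next h𝒜).choose_spec.choose_spec.choose_spec.2 z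

/-- The complex obtained by repeatedly covering kernels, starting from a given matrix. -/
noncomputable def Stage.toGFC [IsNoetherianRing R] (h𝒜 : GrRing 𝒜) (s : Stage 𝒜) : GFC 𝒜 where
  r i := (s.seq h𝒜 i).r
  deg i := (s.seq h𝒜 i).deg
  mat i := (s.seq h𝒜 i).mat
  mat_mem i := (s.seq h𝒜 i).mem
  comp_eq_zero i a c :=
    (s.seq_exact h𝒜 i ((s.seq h𝒜 (i + 1)).mat a)).2 ⟨Pi.single a 1, fun c => by
      simp [Pi.single_apply]⟩ c

theorem exists_isKRes [IsNoetherianRing R] (h𝒜 : GrRing 𝒜) : ∃ K : GFC 𝒜, IsKRes K := by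
  let deg0 : Fin 1 → ℤ := fun _ => 0
  let Z : Submodule R (Fin 1 → R) :=
    Submodule.comap (LinearMap.proj 0 : (Fin 1 → R) →ₗ[R] R) (sPlus 𝒜)
  have hZ : Z ≤ Submodule.span R {z | z ∈ Z ∧ ∃ e, z ∈ piPiece deg0 𝒜 e} := by
    intro z hz
    let g : R →ₗ[R] (Fin 1 → R) := LinearMap.pi fun _ => LinearMap.id
    have hle : sPlus 𝒜 ≤
        (Submodule.span R {z | z ∈ Z ∧ ∃ e, z ∈ piPiece deg0 𝒜 e}).comap g := by
      refine Submodule.span_le.2 fun s hs => Submodule.subset_span ⟨?_, ?_⟩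
      · exact Ideal.subset_span hs
      · obtain ⟨i, _, hi⟩ := hs
        exact ⟨i, mem_piPiece.2 fun _ => by simpa [deg0, g] using hi⟩
    have hz' : z = g (z 0) := by
      funext a
      rw [Subsingleton.elim a 0]
      rfl
    rw [hz']
    exact hle hz
  obtain ⟨r', deg', mat, hmem, hspan⟩ := exists_cover deg0 Z hZ
  let s : Stage 𝒜 := ⟨1, deg0, r', deg', mat, hmem⟩
  refine ⟨s.toGFC h𝒜, fun _ => rfl, ⟨(0 : Fin 1)⟩, fun a b => ?_, fun z hz => ?_, fun i z hz => ?_⟩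
  · have h : mat a ∈ Z := hspan ▸ Submodule.subset_span ⟨a, rfl⟩
    have hb : b = (0 : Fin 1) := Subsingleton.elim (α := Fin 1) _ _
    rw [hb]
    exact h
  · have h : (show Fin 1 → R from z) ∈ Z := hz (0 : Fin 1)
    rw [← hspan, mem_span_range_iff] at h
    obtain ⟨w, hw⟩ := h
    exact ⟨w, funext hw⟩
  · obtain ⟨w, hw⟩ := (s.seq_exact h𝒜 i z).1 fun b => congrFun hz b
    exact ⟨w, funext hw⟩

/-! ### Graded Betti numbers of minimal resolutions -/

section

variable {A : Type} [CommRing A] {ℬ : ℤ → AddSubgroup A} {M : Type} [AddCommGroup M] [Module A M]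
  {ℳ : ℤ → AddSubgroup M}

theorem MGFR.mat_mem_sPlus (h : GrRing ℬ) (F : MGFR ℬ ℳ ({0} : Set A)) (i : ℕ)
    (a : Fin (F.r (i + 1))) (b : Fin (F.r i)) : F.mat i a b ∈ sPlus ℬ := by
  by_cases hd : F.deg (i + 1) a = F.deg i b
  · rw [Set.mem_singleton_iff.1 (F.minimal i a b hd)]
    exact zero_mem _
  · exact h.mem_sPlus (sub_ne_zero.2 hd) (F.mat_mem i a b)

theorem smul_quot_sPlus {s : A} (hs : s ∈ sPlus ℬ) (x : A ⧸ (sPlus ℬ : Submodule _ _)) :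
    s • x = 0 := by
  obtain ⟨y, rfl⟩ := Submodule.Quotient.mk_surjective _ x
  rw [← Submodule.Quotient.mk_smul, Submodule.Quotient.mk_eq_zero]
  exact Ideal.mul_mem_right _ _ hs

theorem MGFR.tmap_quot (h : GrRing ℬ) (F : MGFR ℬ ℳ ({0} : Set A)) (i : ℕ)
    (z : Fin (F.r (i + 1)) → A ⧸ (sPlus ℬ : Submodule _ _)) :
    F.tmap (A ⧸ (sPlus ℬ : Submodule _ _)) i z = 0 := by
  funext b
  rw [GFC.tmap_apply]
  exact Finset.sum_eq_zero fun a _ => smul_quot_sPlus (F.mat_mem_sPlus h i a b) _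

/-- `Tor_i(M, k)_j ≠ 0` forces a minimal resolution to have a generator of `F i` in degree `j`. -/
theorem MGFR.exists_deg_of_hnz (h : GrRing ℬ) (F : MGFR ℬ ℳ ({0} : Set A)) {i : ℕ} {j : ℤ}
    (hF : F.toGFC.HNZ (A ⧸ (sPlus ℬ : Submodule _ _))
      (qmPiece (sPlus ℬ : Submodule _ _) ℬ) i j) : ∃ a, F.deg i a = j := by
  by_contra! hne
  refine hF ((AddSubgroup.eq_bot_iff_forall _).2 ?_)
  rintro _ ⟨z, hz, rfl⟩
  have hz0 : z = 0 := by
    refine Subtype.ext (funext fun a => ?_)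
    obtain ⟨s, hs, hs'⟩ := (GFC.mem_fpiece _).1 hz a
    change z.1 a = 0
    refine Eq.trans hs'.symm ?_
    exact (Submodule.Quotient.mk_eq_zero _).2 (h.mem_sPlus (sub_ne_zero.2 (hne a).symm) hs)
  rw [hz0]
  exact map_zero (Submodule.mkQ _)

/-- Each generator of `F i` of degree `d` gives a nonzero class in `Tor_i(M, k)_d`, since the
differentials of `F` vanish modulo the irrelevant ideal. -/
theorem MGFR.hnz_deg (h : GrRing ℬ) (h1 : (1 : A) ∉ sPlus ℬ) (F : MGFR ℬ ℳ ({0} : Set A))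
    (i : ℕ) (a : Fin (F.r i)) :
    F.toGFC.HNZ (A ⧸ (sPlus ℬ : Submodule _ _))
      (qmPiece (sPlus ℬ : Submodule _ _) ℬ) i (F.deg i a) := by
  intro hbot
  let z : Fin (F.r i) → A ⧸ (sPlus ℬ : Submodule _ _) :=
    Pi.single a (Submodule.Quotient.mk 1)
  have hz : z ∈ F.cyc (A ⧸ (sPlus ℬ : Submodule _ _)) i := by
    cases i with
    | zero => trivial
    | succ i => exact F.tmap_quot h i z
  have hmem : (Submodule.mkQ (Submodule.comap (F.cyc (A ⧸ (sPlus ℬ : Submodule _ _)) i).subtype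
      (F.bdry (A ⧸ (sPlus ℬ : Submodule _ _)) i))) ⟨z, hz⟩ ∈
      F.Hpiece (A ⧸ (sPlus ℬ : Submodule _ _)) (qmPiece (sPlus ℬ : Submodule _ _) ℬ) i
        (F.deg i a) := by
    refine ⟨⟨z, hz⟩, (GFC.mem_fpiece _).2 fun b => ?_, rfl⟩
    change z b ∈ _
    rcases eq_or_ne b a with rfl | hb
    · simp only [z, Pi.single_eq_same, sub_self]
      exact ⟨1, h.one_mem, rfl⟩
    · simp only [z, Pi.single_eq_of_ne hb]
      exact zero_mem _
  rw [hbot] at hmem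
  have h0 := (Submodule.Quotient.mk_eq_zero _).1 (AddSubgroup.mem_bot.1 hmem)
  obtain ⟨w, hw⟩ : ∃ w, F.tmap (A ⧸ (sPlus ℬ : Submodule _ _)) i w = z := h0
  rw [F.tmap_quot h] at hw
  have := congrFun hw a
  simp only [z, Pi.single_eq_same, Pi.zero_apply] at this
  exact h1 ((Submodule.Quotient.mk_eq_zero _).1 this.symm)

end

/-- The generators of a minimal free resolution account for nonzero graded pieces of `Tor`:
if `Tor_i(M, k)_j = 0` then no generator of `F i` has degree `j`. -/
theorem MGFR.deg_ne_of_vt {K : GFC 𝒜} (hK : IsKRes K) (h𝒜 : GrRing 𝒜) (h1 : (1 : R) ∉ sPlus 𝒜)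
    {M : Type} [AddCommGroup M] [Module R M] {ℳ : ℤ → AddSubgroup M}
    (hM : ∀ {i j : ℤ} {s : R} {m : M}, s ∈ 𝒜 i → m ∈ ℳ j → s • m ∈ ℳ (i + j))
    (hind : iSupIndep ℳ) (F : MGFR 𝒜 ℳ ({0} : Set R)) {i : ℕ} {j : ℤ}
    (hvt : VT K (modGMod (𝒜 := 𝒜) (ℳ := ℳ) (A := R) (fun _ _ h => h) hM) i j)
    (a : Fin (F.r i)) : F.deg i a ≠ j := by
  rintro rfl
  let P := F.toGRes (𝒜 := 𝒜) h𝒜 (fun _ _ h => h) hM hind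
  obtain ⟨b⟩ := hK.ne
  have hmat : ∀ p (w : Fin (F.r (p + 1)) → R) c, F.tmap R p w c ∈ sPlus 𝒜 := fun p w c => by
    rw [GFC.tmap_apply]
    exact sum_mem fun a _ => Ideal.mul_mem_right _ _ (F.mat_mem_sPlus h𝒜 p a c)
  obtain ⟨u, w, huw⟩ := bdry_of_vt K (F.deg i a) i P
    (fun p q => vt_pi K _ _ _ _ fun c => vt_ring_succ hK h𝒜 q _)
    (fun p w hw => lift_pi_zero hK h𝒜 (F.deg p) (F.deg i a) (fun c => F.tmap R p (w c))
      (fun c => P.d_mem p ((GFC.mem_fpiece K).1 hw c)) fun c d => hmat p _ d)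
    hvt (fun _ => (Pi.single a 1 : Fin (F.r i) → R)) ((GFC.mem_fpiece K).2 fun c =>
      mem_piPiece.2 fun d => by
        rw [hK.deg0, sub_zero]
        rcases eq_or_ne d a with rfl | hd
        · rw [Pi.single_eq_same, sub_self]
          exact h𝒜.one_mem
        · rw [Pi.single_eq_of_ne hd]
          exact zero_mem _)
  refine h1 ?_
  have h := congrFun (congrFun huw b) a
  have h : (1 : R) = (∑ c, K.mat 0 c b • (show Fin (F.r i) → R from u c)) a +
      F.tmap R i (w b) a := by
    refine Eq.trans ?_ h
    exact (Pi.single_eq_same (M := fun _ => R) a 1).symm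
  rw [h, Finset.sum_apply]
  exact add_mem (sum_mem fun c _ => Ideal.mul_mem_right _ _ (hK.mat0 c b)) (hmat i _ a)

/-! ### Polynomial rings and their homogeneous quotients -/

section

variable {k : Type} [Field k] {N : ℕ}

theorem mem_polyGrading {j : ℤ} {f : MvPolynomial (Fin N) k} (hf : f ∈ polyGrading k N j)
    (hj : 0 ≤ j) : f.IsHomogeneous j.toNat := by
  rw [polyGrading, if_pos hj] at hf
  exact hf

theorem IsHomogeneous.mem_polyGrading {n : ℕ} {f : MvPolynomial (Fin N) k}
    (hf : f.IsHomogeneous n) : f ∈ polyGrading k N n := by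
  rw [polyGrading, if_pos (by omega)]
  exact hf

theorem polyGrading_neg {j : ℤ} (hj : j < 0) : polyGrading k N j = ⊥ := by
  rw [polyGrading, if_neg (by omega)]

/-- The projection onto the degree `n` part kills the other graded pieces. -/
theorem component_eq_zero {n : ℕ} {f : MvPolynomial (Fin N) k}
    (hf : f ∈ ⨆ (d) (_ : d ≠ (n : ℤ)), polyGrading k N d) :
    MvPolynomial.homogeneousComponent n f = 0 := by
  have : (⨆ (d) (_ : d ≠ (n : ℤ)), polyGrading k N d) ≤
      (MvPolynomial.homogeneousComponent n : MvPolynomial (Fin N) k →ₗ[k] _).toAddMonoidHom.ker := by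
    refine iSup₂_le fun d hd g hg => ?_
    change MvPolynomial.homogeneousComponent n g = 0
    rcases lt_or_ge d 0 with h | h
    · rw [polyGrading_neg h] at hg
      rw [AddSubgroup.mem_bot.1 hg, map_zero]
    · rw [MvPolynomial.homogeneousComponent_of_mem (mem_polyGrading hg h), if_neg (by omega)]
  exact this hf

theorem grRing_poly : GrRing (polyGrading k N) where
  one_mem := IsHomogeneous.mem_polyGrading (MvPolynomial.isHomogeneous_one _ _)
  mul_mem {i j a b} ha hb := by
    rcases lt_or_ge i 0 with h | hi
    · rw [polyGrading_neg h] at ha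
      rw [AddSubgroup.mem_bot.1 ha, zero_mul]
      exact zero_mem _
    rcases lt_or_ge j 0 with h | hj
    · rw [polyGrading_neg h] at hb
      rw [AddSubgroup.mem_bot.1 hb, mul_zero]
      exact zero_mem _
    have := IsHomogeneous.mem_polyGrading ((mem_polyGrading ha hi).mul (mem_polyGrading hb hj))
    rwa [show ((i.toNat + j.toNat : ℕ) : ℤ) = i + j by omega] at this
  neg i hi := polyGrading_neg hi
  indep j := by
    rw [AddSubgroup.disjoint_def]
    intro f hf hf'
    rcases lt_or_ge j 0 with h | hj
    · rw [polyGrading_neg h] at hf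
      exact hf
    lift j to ℕ using hj
    rw [← component_eq_zero hf']
    exact (MvPolynomial.homogeneousComponent_eq_self (mem_polyGrading hf (by omega))).symm
  top := by
    rw [eq_top_iff]
    intro f _
    rw [← MvPolynomial.sum_homogeneousComponent f]
    exact sum_mem fun n _ => (le_iSup (polyGrading k N) n)
      (IsHomogeneous.mem_polyGrading (MvPolynomial.homogeneousComponent_isHomogeneous n f))

attribute [local instance] MvPolynomial.gradedAlgebra

/-- An ideal generated by homogeneous elements contains the homogeneous components of its
elements. -/
theorem component_mem {J : Ideal (MvPolynomial (Fin N) k)}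
    (hJ : J = Ideal.span {f | f ∈ J ∧ ∃ d : ℤ, f ∈ polyGrading k N d})
    {f : MvPolynomial (Fin N) k} (hf : f ∈ J) (n : ℕ) :
    MvPolynomial.homogeneousComponent n f ∈ J := by
  have hJ' : J.IsHomogeneous (MvPolynomial.homogeneousSubmodule (Fin N) k) := by
    rw [hJ]
    refine Ideal.homogeneous_span _ _ ?_
    rintro g ⟨_, d, hg⟩
    rcases lt_or_ge d 0 with h | h
    · rw [polyGrading_neg h] at hg
      exact ⟨0, by rw [AddSubgroup.mem_bot.1 hg]; exact zero_mem _⟩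
    · exact ⟨d.toNat, mem_polyGrading hg h⟩
  exact MvPolynomial.homogeneousComponent_mem_of_mem hJ' hf n

theorem grRing_quot {J : Ideal (MvPolynomial (Fin N) k)}
    (hJ : J = Ideal.span {f | f ∈ J ∧ ∃ d : ℤ, f ∈ polyGrading k N d}) :
    GrRing (quotGrading (polyGrading k N) J) where
  one_mem := ⟨1, grRing_poly.one_mem, rfl⟩
  mul_mem := by
    rintro i j _ _ ⟨a, ha, rfl⟩ ⟨b, hb, rfl⟩
    exact ⟨a * b, grRing_poly.mul_mem ha hb, rfl⟩
  neg i hi := by rw [quotGrading, polyGrading_neg hi, AddSubgroup.map_bot]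
  indep j := by
    rw [AddSubgroup.disjoint_def]
    rintro _ ⟨f, hf, rfl⟩ hf'
    simp only [quotGrading, ← AddSubgroup.map_iSup] at hf'
    obtain ⟨g, hg, hfg⟩ := hf'
    have hfg : Ideal.Quotient.mk J g = Ideal.Quotient.mk J f := hfg
    rcases lt_or_ge j 0 with h | hj
    · have hf : f ∈ polyGrading k N j := hf
      rw [polyGrading_neg h] at hf
      rw [AddSubgroup.mem_bot.1 hf, map_zero]
    lift j to ℕ using hj
    have := component_mem hJ (Ideal.Quotient.eq.1 hfg) j
    have hself : MvPolynomial.homogeneousComponent j f = f :=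
      MvPolynomial.homogeneousComponent_eq_self (mem_polyGrading hf (by omega))
    rw [map_sub, component_eq_zero hg, hself, zero_sub, neg_mem_iff] at this
    exact Ideal.Quotient.eq_zero_iff_mem.2 this
  top := by
    change (⨆ j, AddSubgroup.map (Ideal.Quotient.mk J).toAddMonoidHom (polyGrading k N j)) = ⊤
    rw [← AddSubgroup.map_iSup, grRing_poly.top]
    exact AddSubgroup.map_top_of_surjective _ Ideal.Quotient.mk_surjective

theorem constantCoeff_sPlus {f : MvPolynomial (Fin N) k} (hf : f ∈ sPlus (polyGrading k N)) :
    MvPolynomial.constantCoeff f = 0 := by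
  have : sPlus (polyGrading k N) ≤ RingHom.ker (MvPolynomial.constantCoeff (σ := Fin N) (R := k)) := by
    refine Ideal.span_le.2 ?_
    rintro g ⟨i, hi, hg⟩
    exact (mem_polyGrading hg hi.le).coeff_eq_zero (by simp; omega)
  exact this hf

theorem one_notMem_sPlus_quot {J : Ideal (MvPolynomial (Fin N) k)}
    (hJ : J = Ideal.span {f | f ∈ J ∧ ∃ d : ℤ, f ∈ polyGrading k N d}) (hJ1 : J ≠ ⊤) :
    (1 : MvPolynomial (Fin N) k ⧸ J) ∉ sPlus (quotGrading (polyGrading k N) J) := by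
  intro h
  have hle : sPlus (quotGrading (polyGrading k N) J) ≤
      (sPlus (polyGrading k N)).map (Ideal.Quotient.mk J) := by
    refine Ideal.span_le.2 ?_
    rintro _ ⟨i, hi, f, hf, rfl⟩
    exact Ideal.mem_map_of_mem _ (Ideal.subset_span ⟨i, hi, hf⟩)
  obtain ⟨f, hf, hf1⟩ := (Ideal.mem_map_iff_of_surjective _ Ideal.Quotient.mk_surjective).1 (hle h)
  rw [← map_one (Ideal.Quotient.mk J)] at hf1
  -- the degree zero component of `f - 1` is `-1`
  have := component_mem hJ (Ideal.Quotient.eq.1 hf1) 0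
  rw [MvPolynomial.homogeneousComponent_zero, ← MvPolynomial.constantCoeff_eq, map_sub,
    constantCoeff_sPlus hf, map_one, zero_sub, map_neg, map_one, neg_mem_iff] at this
  exact hJ1 ((Ideal.eq_top_iff_one J).2 this)

end

end ChangeOfRings

/-- **Change of rings for graded Betti numbers** (Proposition 2.1 (ii)).  Let `R` be a
standard graded polynomial ring over a field `k`, `J ⊆ R` a homogeneous ideal, `S = R/J`,
and `M` a finitely generated graded `S`-module.  Then for every `i`,
`b_i^R(M) ≤ max_{p+q=i} (b_p^S(M) + b_q^R(S))`, stated elementwise via minimal graded free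
resolutions of `M` over `R` and over `S` and of `S` over `R`, graded Betti numbers being
computed as graded pieces of `Tor` (homology of the resolution tensored with the residue
field). -/
theorem betti_change_of_rings (k : Type) [Field k] (N : ℕ)
    (J : Ideal (MvPolynomial (Fin N) k))
    (hJhom : J = Ideal.span {f | f ∈ J ∧ ∃ d : ℤ, f ∈ polyGrading k N d})
    (M : Type) [AddCommGroup M]
    [Module (MvPolynomial (Fin N) k) M]
    [Module (MvPolynomial (Fin N) k ⧸ J) M]
    (hcompat : ∀ (f : MvPolynomial (Fin N) k) (m : M),
      f • m = (Ideal.Quotient.mk J f) • m)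
    [Module.Finite (MvPolynomial (Fin N) k ⧸ J) M]
    (ℳ : ℤ → AddSubgroup M)
    (hgm : IsGradedMod (quotGrading (polyGrading k N) J) ℳ)
    (FRM : MGFR (polyGrading k N) ℳ ({0} : Set (MvPolynomial (Fin N) k)))
    (FSM : MGFR (quotGrading (polyGrading k N) J) ℳ ({0} : Set (MvPolynomial (Fin N) k ⧸ J)))
    (FRS : MGFR (polyGrading k N) (quotGrading (polyGrading k N) J)
      ({0} : Set (MvPolynomial (Fin N) k))) :
    ∀ (i : ℕ) (j : ℤ),
      FRM.toGFC.HNZ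
        (MvPolynomial (Fin N) k ⧸ (sPlus (polyGrading k N) : Submodule _ _))
        (qmPiece (sPlus (polyGrading k N) : Submodule _ _) (polyGrading k N)) i j →
      ∃ p q : ℕ, p + q = i ∧
        ∃ j₁ : ℤ,
          FSM.toGFC.HNZ
            ((MvPolynomial (Fin N) k ⧸ J) ⧸
              (sPlus (quotGrading (polyGrading k N) J) : Submodule _ _))
            (qmPiece (sPlus (quotGrading (polyGrading k N) J) : Submodule _ _)
              (quotGrading (polyGrading k N) J)) p j₁ ∧
        ∃ j₂ : ℤ,
          FRS.toGFC.HNZ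
            (MvPolynomial (Fin N) k ⧸ (sPlus (polyGrading k N) : Submodule _ _))
            (qmPiece (sPlus (polyGrading k N) : Submodule _ _) (polyGrading k N)) q j₂ ∧
          j ≤ j₁ + j₂ := by
  intro i j h
  by_contra hcon
  have hR : GrRing (polyGrading k N) := grRing_poly
  have hS := grRing_quot hJhom
  obtain ⟨K, hK⟩ := exists_isKRes hR
  obtain ⟨a, ha⟩ := FRM.exists_deg_of_hnz hR h
  have h1 : (1 : MvPolynomial (Fin N) k) ∉ sPlus (polyGrading k N) := fun h1 =>
    one_ne_zero ((map_one MvPolynomial.constantCoeff).symm.trans (constantCoeff_sPlus h1))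
  have hsm (r : MvPolynomial (Fin N) k) (s : MvPolynomial (Fin N) k ⧸ J) :
      r • s = Ideal.Quotient.mk J r * s := by
    obtain ⟨s, rfl⟩ := Ideal.Quotient.mk_surjective s
    rfl
  have : IsScalarTower (MvPolynomial (Fin N) k) (MvPolynomial (Fin N) k ⧸ J) M :=
    ⟨fun r s m => by rw [hcompat, smul_smul, hsm]⟩
  have halg : ∀ (d : ℤ) (s : MvPolynomial (Fin N) k), s ∈ polyGrading k N d →
      algebraMap _ (MvPolynomial (Fin N) k ⧸ J) s ∈ quotGrading (polyGrading k N) J d :=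
    fun d s hs => ⟨s, hs, rfl⟩
  have hM {d e : ℤ} {s : MvPolynomial (Fin N) k} {m : M} (hs : s ∈ polyGrading k N d)
      (hm : m ∈ ℳ e) : s • m ∈ ℳ (d + e) := by
    rw [hcompat]
    exact hgm.smul_mem (halg d s hs) hm
  have hSS {d e : ℤ} {s : MvPolynomial (Fin N) k} {m : MvPolynomial (Fin N) k ⧸ J}
      (hs : s ∈ polyGrading k N d) (hm : m ∈ quotGrading (polyGrading k N) J e) :
      s • m ∈ quotGrading (polyGrading k N) J (d + e) := by
    rw [hsm]
    exact hS.mul_mem (halg d s hs) hm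
  have hind := DirectSum.IsInternal.addSubgroup_iSupIndep hgm.internal
  refine FRM.deg_ne_of_vt hK hR h1 hM hind ?_ a ha
  by_cases hJ : J = ⊤
  · have : Subsingleton (MvPolynomial (Fin N) k ⧸ J) := Ideal.Quotient.subsingleton_iff.2 hJ
    have : Subsingleton M := Module.subsingleton (MvPolynomial (Fin N) k ⧸ J) M
    exact @VT_of_subsingleton _ _ _ K (modGMod _ hM) ‹Subsingleton M› i j
  -- `Tor^R_i(M, k)_j` vanishes as soon as `Tor^R_q` of each `S`-free term of `FSM` does
  have h1S := one_notMem_sPlus_quot hJhom hJ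
  refine vt_of_res K j i (FSM.toGRes hS halg hgm.smul_mem hind) fun p q hpq => ?_
  refine vt_pi K _ _ _ _ fun b => ?_
  -- likewise `Tor^R_q(S, k)` is controlled by the `R`-free terms of `FRS`, which are acyclic
  -- and contribute only the degrees of their generators
  refine vt_of_res K _ q (FRS.toGRes hR (fun _ _ h => h) hSS hS.indep) fun p' q' hpq' => ?_
  refine vt_pi K _ _ _ _ fun c => ?_
  cases q' with
  | succ q' => exact vt_ring_succ hK hR q' _
  | zero =>
    obtain rfl : p' = q := hpq'
    refine vt_ring_zero hK hR fun hj => hcon ?_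
    exact ⟨p, p', hpq, FSM.deg p b, FSM.hnz_deg hS h1S p b, FRS.deg p' c,
      FRS.hnz_deg hR h1 p' c, by omega⟩
end

section
/- Let S be a standard graded algebra over a field k, m = S_+ its irrelevant ideal, and M a finitely generated graded S-module of dimension d. Then for every i, b_i^S(M) ≤ max over 0 ≤ p ≤ d of (a_p(M) + b_{p+i}^S(k)), where a_p(M) = max{ j : H^p_m(M)_j ≠ 0 } and b_j^S(k) is the maximal degree of a minimal j-th syzygy of k over S. -/
/-!
The proof compares the minimal resolution `F_•` of `k = S / S₊` with the Koszul cocomplexes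
`K^•(x^t; M)`, whose cohomology computes `H^p_m(M)` in the limit over `t`, inside the double
complex `F_q ⊗ K^p(x^t; M)`.  Suppose `H^p_m(M)_{j - e} = 0` for all `p` and all degrees `e` of
generators of `F_{i+p}`.

* A degree `j` cycle of `F_i ⊗ M` extends to a staircase `c_p ∈ F_{i+p} ⊗ K^p` with
  `d c_p = ∂ c_{p+1}` (`exists_stair`).  In cohomological degree `p + 1 > 0` passing from
  exponent `t` to `t + 1` multiplies each entry by some `x_s`, and `x_s` is null-homotopic on a
  resolution of `k` (`MGFR.exists_homotopy`), so the obstruction to a further step disappears.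
* As `K^{n+1} = 0`, the staircase ends; the assumed vanishing of local cohomology shortens it step
  by step, changing its foot by boundaries only (`stair_descend`).  So the given cycle is a boundary
  and `Tor_i(k, M)_j = 0` (`mem_bdry_of_lc`).

This replaces the spectral sequence `H^p_m(M) ⊗ F_q ⇒ Tor_{q-p}(M, k)`.  Two further facts enter.
Local cohomology vanishes above the dimension of `M` (`KVan_of_supportDim_lt`): the induction on
`p` divides out the torsion and then a nonzerodivisor in the ideal of the `x_s`.  And `Tor` is
balanced: a zigzag in `F_• ⊗ G_•`, where `G_•` is the minimal resolution of `M`, shows that a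
generator of degree `j` of `G_i` would give a nonzero element of `Tor_i(k, M)_j` computed from
`F_•` (`deg_ne_of_vanish`).  By minimality the degrees in which `Tor(k, k)` and `Tor(M, k)` live
are exactly the degrees of the generators of `F_•` and of `G_•`.
-/

open Finset

/-! ### Koszul cochains -/

section Kos
variable {S : Type} [CommRing S] {M : Type} [AddCommGroup M] [Module S M] {n : ℕ}

/-- The sign `(-1)^{#{a ∈ T : a < s}}` of the Koszul differential. -/
def ksgn (s : Fin n) (T : Finset (Fin n)) : ℤ := (-1) ^ (T.filter (fun a => a < s)).card

lemma ksgn_mul_self (s : Fin n) (T : Finset (Fin n)) : ksgn s T * ksgn s T = 1 := by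
  rw [ksgn, ← pow_add, ← two_mul, pow_mul]; simp

lemma ksgn_erase_of_lt {r s : Fin n} {T : Finset (Fin n)} (hr : r ∈ T) (h : r < s) :
    ksgn s (T.erase r) = - ksgn s T := by
  unfold ksgn
  have hmem : r ∈ T.filter (fun a => a < s) := by simp [hr, h]
  rw [Finset.filter_erase, ← Finset.card_erase_add_one hmem, pow_succ]
  ring

lemma ksgn_erase_of_gt {r s : Fin n} {T : Finset (Fin n)} (h : s < r) :
    ksgn s (T.erase r) = ksgn s T := by
  unfold ksgn
  rw [Finset.filter_erase, Finset.erase_eq_of_notMem]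
  simp [h.le]

/-- The sign rule behind `d ∘ d = 0`: deleting two elements in the two possible orders gives
opposite signs. -/
lemma ksgn_swap {r s : Fin n} {T : Finset (Fin n)} (hr : r ∈ T) (hs : s ∈ T) (h : r ≠ s) :
    ksgn s T * ksgn r (T.erase s) = - (ksgn r T * ksgn s (T.erase r)) := by
  rcases lt_or_gt_of_ne h with h | h
  · rw [ksgn_erase_of_lt hr h, ksgn_erase_of_gt h]; ring
  · rw [ksgn_erase_of_lt hs h, ksgn_erase_of_gt h]; ring

lemma ksgn_swap' {r s : Fin n} {T : Finset (Fin n)} (hr : r ∈ T) (hs : s ∈ T) (h : r ≠ s) :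
    ksgn r (T.erase s) * ksgn s (T.erase r) = - (ksgn s T * ksgn r T) := by
  linear_combination (ksgn s T * ksgn s (T.erase r)) * ksgn_swap hr hs h
    - (ksgn r (T.erase s) * ksgn s (T.erase r)) * ksgn_mul_self s T
    - (ksgn s T * ksgn r T) * ksgn_mul_self s (T.erase r)

/-- The Koszul differential on functions of arbitrary finite subsets, all cohomological degrees at
once. -/
def kD (x : Fin n → S) (t : ℕ) (Z : Finset (Fin n) → M) : Finset (Fin n) → M :=
  fun T => ∑ s ∈ T, ksgn s T • (x s ^ t • Z (T.erase s))

/-- Contraction with the `s₀`-th basis vector. -/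
def kC (s₀ : Fin n) (Z : Finset (Fin n) → M) : Finset (Fin n) → M :=
  fun T => if s₀ ∈ T then 0 else ksgn s₀ (insert s₀ T) • Z (insert s₀ T)

lemma kD_kD (x : Fin n → S) (t : ℕ) (Z : Finset (Fin n) → M) : kD x t (kD x t Z) = 0 := by
  funext T
  simp only [kD, Finset.smul_sum, Pi.zero_apply]
  rw [Finset.sum_sigma']
  refine Finset.sum_involution (fun p _ => ⟨p.2, p.1⟩) ?_ ?_ ?_ ?_
  · rintro ⟨s, r⟩ h
    simp only [Finset.mem_sigma, Finset.mem_erase] at h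
    obtain ⟨hs, hrs, hr⟩ := h
    dsimp only
    rw [Finset.erase_right_comm (a := r), smul_comm (x s ^ t), smul_comm (x r ^ t) (ksgn s _),
      smul_smul (ksgn s T), smul_smul (ksgn r T), ksgn_swap hr hs hrs, smul_comm (x r ^ t) (x s ^ t),
      neg_smul, neg_add_cancel]
  · rintro ⟨s, r⟩ h _ h2
    simp only [Finset.mem_sigma, Finset.mem_erase] at h
    exact h.2.1 (congrArg Sigma.fst h2)
  · rintro ⟨s, r⟩ h
    simp only [Finset.mem_sigma, Finset.mem_erase] at h ⊢
    exact ⟨h.2.2, h.2.1.symm, h.1⟩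
  · rintro ⟨s, r⟩ h; rfl

/-- Contraction with the `s₀`-th basis vector is a homotopy between multiplication by `x_{s₀}^t`
and zero. -/
lemma kD_kC (x : Fin n → S) (t : ℕ) (s₀ : Fin n) (Z : Finset (Fin n) → M) (T : Finset (Fin n)) :
    kD x t (kC s₀ Z) T + kC s₀ (kD x t Z) T = x s₀ ^ t • Z T := by
  by_cases h : s₀ ∈ T
  · simp only [kC, h, if_true, add_zero, kD]
    rw [Finset.sum_eq_single s₀]
    · simp only [Finset.mem_erase, ne_eq, not_true, false_and, if_false, Finset.insert_erase h]
      rw [smul_comm (x s₀ ^ t), smul_smul, ksgn_mul_self, one_smul]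
    · intro s hs hne
      simp [h, Ne.symm hne]
    · exact fun h' => absurd h h'
  · simp only [kC, h, if_false, kD]
    rw [Finset.sum_insert h, smul_add, smul_smul, ksgn_mul_self, one_smul,
      Finset.erase_insert h, add_left_comm, Finset.smul_sum, ← Finset.sum_add_distrib,
      Finset.sum_eq_zero, add_zero]
    intro s hs
    have hne : s₀ ≠ s := fun e => h (e ▸ hs)
    have e1 : insert s₀ (T.erase s) = (insert s₀ T).erase s :=
      (Finset.erase_insert_of_ne hne).symm
    have e2 : T.erase s = ((insert s₀ T).erase s₀).erase s := by rw [Finset.erase_insert h]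
    have e3 : ksgn s T = ksgn s ((insert s₀ T).erase s₀) := by rw [Finset.erase_insert h]
    simp only [Finset.mem_erase, h, and_false, if_false, e1]
    rw [smul_comm (x s ^ t), smul_smul, smul_smul, e3,
      ksgn_swap' (r := s) (s := s₀) (Finset.mem_insert_of_mem hs) (Finset.mem_insert_self _ _)
        hne.symm, neg_smul, neg_add_cancel]

/-- Extension by zero of a cochain to all finite subsets. -/
def kext {i : ℕ} (z : KCochain M n i) : Finset (Fin n) → M :=
  fun T => if h : T.card = i then z ⟨T, h⟩ else 0

lemma kext_apply {i : ℕ} (z : KCochain M n i) (T : {T : Finset (Fin n) // T.card = i}) :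
    kext z T.1 = z T := by
  simp [kext, T.2]

lemma kd_apply (x : Fin n → S) (t i : ℕ) (z : KCochain M n i)
    (T : {T : Finset (Fin n) // T.card = i + 1}) : kd x t i z T = kD x t (kext z) T.1 := by
  rw [kd, kD, ← Finset.sum_attach T.1]
  refine Finset.sum_congr rfl fun s _ => ?_
  have : (T.1.erase s.1).card = i := by rw [Finset.card_erase_of_mem s.2, T.2]; rfl
  simp [kext, this, ksgn]

lemma kext_kd (x : Fin n → S) (t i : ℕ) (z : KCochain M n i) :
    kext (kd x t i z) = kD x t (kext z) := by
  funext T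
  by_cases h : T.card = i + 1
  · rw [← kd_apply x t i z ⟨T, h⟩]
    exact kext_apply _ ⟨T, h⟩
  · rw [kext, dif_neg h, kD, Finset.sum_eq_zero]
    intro s hs
    have : (T.erase s).card ≠ i := by
      have := Finset.card_erase_add_one hs
      omega
    simp [kext, this]

/-- The Koszul codifferential as a linear map. -/
noncomputable def kdL (M : Type) [AddCommGroup M] [Module S M] (x : Fin n → S) (t i : ℕ) :
    KCochain M n i →ₗ[S] KCochain M n (i + 1) where
  toFun := kd x t i
  map_add' y z := by
    funext T
    simp only [kd, Pi.add_apply, smul_add]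
    exact Finset.sum_add_distrib
  map_smul' s z := by
    funext T
    simp only [kd, Pi.smul_apply, RingHom.id_apply, Finset.smul_sum]
    refine Finset.sum_congr rfl fun a _ => ?_
    rw [smul_comm (x a.1 ^ t) s, smul_comm _ s]

@[simp] lemma kdL_apply (x : Fin n → S) (t i : ℕ) (z : KCochain M n i) :
    kdL M x t i z = kd x t i z := rfl

/-- The transition maps of the Koszul cocomplexes as linear maps. -/
noncomputable def kpushL (M : Type) [AddCommGroup M] [Module S M] (x : Fin n → S) (u i : ℕ) :
    KCochain M n i →ₗ[S] KCochain M n i where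
  toFun := kpush x u i
  map_add' y z := by
    funext T
    simp [kpush]
  map_smul' s z := by
    funext T
    simp only [kpush, Pi.smul_apply, RingHom.id_apply]
    exact smul_comm _ _ _

@[simp] lemma kpushL_apply (x : Fin n → S) (t i : ℕ) (z : KCochain M n i) :
    kpushL M x t i z = kpush x t i z := rfl

lemma kd_kd (x : Fin n → S) (t i : ℕ) (z : KCochain M n i) :
    kd x t (i + 1) (kd x t i z) = 0 := by
  funext T
  rw [kd_apply, kext_kd, kD_kD]; rfl

lemma kpush_kpush (x : Fin n → S) (u v i : ℕ) (z : KCochain M n i) :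
    kpush x v i (kpush x u i z) = kpush x (u + v) i z := by
  funext T
  simp only [kpush, smul_smul, ← Finset.prod_mul_distrib, pow_add, mul_comm]

lemma kpush_zero_deg (x : Fin n → S) (u : ℕ) (z : KCochain M n 0) : kpush x u 0 z = z := by
  funext T
  have : T.1 = ∅ := Finset.card_eq_zero.1 T.2
  simp [kpush, this]

/-- The transition maps commute with the Koszul codifferentials. -/
lemma kd_kpush (x : Fin n → S) (t u i : ℕ) (z : KCochain M n i) :
    kd x (t + u) i (kpush x u i z) = kpush x u (i + 1) (kd x t i z) := by
  funext T
  simp only [kd, kpush, Finset.smul_sum]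
  refine Finset.sum_congr rfl fun s _ => ?_
  rw [smul_comm _ ((-1 : ℤ) ^ _), smul_smul, smul_smul, ← Finset.mul_prod_erase _ _ s.2]
  congr 2
  ring

/-- Applying a linear map to the coefficients of a cochain. -/
def kmap {M' : Type} [AddCommGroup M'] [Module S M'] (f : M →ₗ[S] M') {i : ℕ}
    (z : KCochain M n i) : KCochain M' n i := fun T => f (z T)

lemma kd_kmap {M' : Type} [AddCommGroup M'] [Module S M'] (f : M →ₗ[S] M') (x : Fin n → S)
    (t i : ℕ) (z : KCochain M n i) : kd x t i (kmap f z) = kmap f (kd x t i z) := by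
  funext T
  simp [kd, kmap, map_sum]

lemma kpush_kmap {M' : Type} [AddCommGroup M'] [Module S M'] (f : M →ₗ[S] M') (x : Fin n → S)
    (u i : ℕ) (z : KCochain M n i) : kpush x u i (kmap f z) = kmap f (kpush x u i z) := by
  funext T
  simp [kpush, kmap]

/-- Coboundaries stay coboundaries under the transition maps. -/
lemma kIsCobound_push (x : Fin n → S) (t u : ℕ) : ∀ (i : ℕ) (z : KCochain M n i),
    kIsCobound x t i z → kIsCobound x (t + u) i (kpush x u i z)
  | 0, z, h => by
    change z = 0 at h
    subst h
    exact (kpushL M x u 0).map_zero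
  | i + 1, z, ⟨w, hw⟩ => ⟨kpush x u i w, by rw [kd_kpush, hw]⟩

/-- `x_s^t` kills the Koszul cohomology of `x_1^t, …, x_n^t`. -/
lemma exists_kd_eq_pow_smul (x : Fin n → S) (t i : ℕ) (s : Fin n) (z : KCochain M n (i + 1))
    (hz : kd x t (i + 1) z = 0) : ∃ w : KCochain M n i, kd x t i w = x s ^ t • z := by
  refine ⟨fun T => kC s (kext z) T.1, ?_⟩
  funext T
  have e : kext (fun T : {T : Finset (Fin n) // T.card = i} => kC s (kext z) T.1)
      = kC s (kext z) := by
    funext T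
    by_cases h : T.card = i
    · simp [kext, h]
    · rw [kext, dif_neg h, kC]
      split_ifs with h1
      · rfl
      · have : (insert s T).card ≠ i + 1 := by
          rw [Finset.card_insert_of_notMem h1]; omega
        simp [kext, this]
  have h0 : kD x t (kext z) = 0 := by
    rw [← kext_kd, hz]; funext T; simp [kext]
  have := kD_kC x t s (kext z) T.1
  rw [h0] at this
  rw [kd_apply, e, Pi.smul_apply, ← kext_apply z, ← this]
  simp [kC]

end Kos

/-! ### Vanishing of local cohomology above the dimension -/

section Van
variable {S : Type} [CommRing S] {n : ℕ}

/-- Vanishing of the `p`-th local cohomology of `M`, all internal degrees at once: every Koszul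
cocycle becomes a coboundary after a transition map. -/
def KVan (x : Fin n → S) (M : Type) [AddCommGroup M] [Module S M] (p : ℕ) : Prop :=
  ∀ (t : ℕ) (z : KCochain M n p), kd x t p z = 0 →
    ∃ u, kIsCobound x (t + u) p (kpush x u p z)

/-- The submodule `Γ_I(M)` of elements killed by a power of each `x_s`. -/
def gam (x : Fin n → S) (M : Type) [AddCommGroup M] [Module S M] : Submodule S M where
  carrier := {m | ∃ N : ℕ, ∀ s, x s ^ N • m = 0}
  add_mem' := by
    rintro a b ⟨N, hN⟩ ⟨N', hN'⟩
    refine ⟨N + N', fun s => ?_⟩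
    rw [smul_add, pow_add, mul_smul, mul_smul, hN', smul_comm, hN]; simp
  zero_mem' := ⟨0, by simp⟩
  smul_mem' := by
    rintro c a ⟨N, hN⟩
    exact ⟨N, fun s => by rw [smul_comm, hN, smul_zero]⟩

lemma mem_gam {x : Fin n → S} {M : Type} [AddCommGroup M] [Module S M] {m : M} :
    m ∈ gam x M ↔ ∃ N : ℕ, ∀ s, x s ^ N • m = 0 := Iff.rfl

lemma mem_gam_of_smul_mem {x : Fin n → S} {M : Type} [AddCommGroup M] [Module S M] {m : M}
    (h : ∀ s, x s • m ∈ gam x M) : m ∈ gam x M := by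
  choose N hN using h
  refine ⟨(∑ s, N s) + 1, fun s => ?_⟩
  have h1 : N s ≤ ∑ s, N s := Finset.single_le_sum (fun _ _ => Nat.zero_le _) (Finset.mem_univ s)
  rw [pow_succ, mul_smul, ← Nat.sub_add_cancel h1, pow_add, mul_smul, hN, smul_zero]

lemma kmap_surj {M M' : Type} [AddCommGroup M] [Module S M] [AddCommGroup M'] [Module S M']
    (f : M →ₗ[S] M') (hf : Function.Surjective f) {i : ℕ} (z : KCochain M' n i) :
    ∃ w : KCochain M n i, kmap f w = z := by
  choose g hg using hf
  exact ⟨fun T => g (z T), funext fun T => hg _⟩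

/-- In positive cohomological degree, cochains with values in `Γ_I(M)` die under the transition
maps. -/
lemma kpush_gam (x : Fin n → S) {M : Type} [AddCommGroup M] [Module S M] (p : ℕ)
    (z : KCochain M n (p + 1)) (hz : ∀ T, z T ∈ gam x M) : ∃ u, kpush x u (p + 1) z = 0 := by
  choose N hN using hz
  refine ⟨∑ T, N T, ?_⟩
  funext T
  have h1 : N T ≤ ∑ T, N T := Finset.single_le_sum (fun _ _ => Nat.zero_le _) (Finset.mem_univ T)
  obtain ⟨s, hs⟩ : T.1.Nonempty := by
    rw [← Finset.card_pos, T.2]; omega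
  rw [kpush, ← Finset.prod_erase_mul _ _ hs, mul_smul, ← Nat.sub_add_cancel h1, pow_add,
    mul_smul, hN, smul_zero, smul_zero]; rfl

/-- Positive local cohomology does not see the torsion `Γ_I(M)`. -/
lemma KVan_of_quot_gam (x : Fin n → S) {M : Type} [AddCommGroup M] [Module S M] (p : ℕ)
    (h : KVan x (M ⧸ gam x M) (p + 1)) : KVan x M (p + 1) := by
  intro t z hz
  obtain ⟨u, w', hw'⟩ := h t (kmap (gam x M).mkQ z) (by
    rw [kd_kmap, hz]; funext T; simp [kmap])
  obtain ⟨w, rfl⟩ := kmap_surj (gam x M).mkQ (Submodule.mkQ_surjective _) w'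
  rw [kd_kmap, kpush_kmap] at hw'
  obtain ⟨v, hv⟩ := kpush_gam x p (kpush x u (p + 1) z - kd x (t + u) p w) (by
    intro T
    have := congrFun hw' T
    simp only [kmap, Submodule.mkQ_apply] at this
    exact (Submodule.Quotient.eq _).1 this.symm)
  refine ⟨u + v, kpush x v p w, ?_⟩
  rw [← add_assoc, kd_kpush, ← kpush_kpush]
  have := (kpushL M x v (p + 1)).map_sub (kpush x u (p + 1) z) (kd x (t + u) p w)
  simp only [kpushL_apply] at this
  rw [hv] at this
  exact (sub_eq_zero.1 this.symm).symm

/-- A finitely generated module without `I`-torsion has a nonzerodivisor in `I`. -/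
lemma exists_regular [IsNoetherianRing S] (x : Fin n → S) (M : Type) [AddCommGroup M]
    [Module S M] [Module.Finite S M] (h : gam x M = ⊥) :
    ∃ y ∈ Ideal.span (Set.range x), IsSMulRegular M y := by
  by_contra hc
  push Not at hc
  have hsub : (Ideal.span (Set.range x) : Set S) ⊆ ⋃ p ∈ associatedPrimes S M, (p : Set S) := by
    rw [biUnion_associatedPrimes_eq_compl_regular]
    exact fun y hy => hc y hy
  obtain ⟨P, hP, hle⟩ := (Ideal.subset_union_prime_finite (associatedPrimes.finite S M)
    (f := id) 0 0 (fun _ h _ _ => h.isPrime)).1 hsub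
  obtain ⟨hprime, m, hm⟩ := isAssociatedPrime_iff.1 hP
  have hm0 : m ∈ gam x M := mem_gam_of_smul_mem fun s => by
    have : x s ∈ P := hle (Ideal.subset_span ⟨s, rfl⟩)
    rw [hm, Submodule.mem_colon_singleton, Submodule.mem_bot] at this
    rw [this]
    exact zero_mem _
  rw [h, Submodule.mem_bot] at hm0
  refine hprime.ne_top ?_
  rw [hm, hm0, Ideal.eq_top_iff_one, Submodule.mem_colon_singleton, smul_zero]
  exact zero_mem _

/-- Local cohomology vanishes in cohomological degrees above the dimension of the support.  The
induction divides out the torsion, then a nonzerodivisor of `I`; a power of the latter kills a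
given class, so that the class lifts to one of lower degree over a module of lower dimension. -/
theorem KVan_of_supportDim_lt [IsNoetherianRing S] (x : Fin n → S) (p : ℕ) :
    ∀ (M : Type) [AddCommGroup M] [Module S M] [Module.Finite S M],
      Module.supportDim S M < (p : WithBot ℕ∞) → KVan x M p := by
  induction p with
  | zero =>
    intro M _ _ _ h t z hz
    have : Module.supportDim S M = ⊥ := by
      by_contra hb
      obtain ⟨d, hd⟩ := WithBot.ne_bot_iff_exists.1 hb
      rw [← hd] at h
      exact absurd h (by rw [not_lt]; exact WithBot.coe_le_coe.2 (zero_le))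
    have : Subsingleton M := Module.supportDim_eq_bot_iff_subsingleton S M |>.1 this
    exact ⟨0, Subsingleton.elim _ _⟩
  | succ p ih =>
    intro M _ _ _ h
    apply KVan_of_quot_gam
    set M' := M ⧸ gam x M with hM'
    have h' : Module.supportDim S M' < ((p + 1 : ℕ) : WithBot ℕ∞) :=
      (Module.supportDim_le_of_surjective _ (Submodule.mkQ_surjective (gam x M))).trans_lt h
    have hg : gam x M' = ⊥ := by
      rw [eq_bot_iff]
      intro m hm
      obtain ⟨m, rfl⟩ := Submodule.mkQ_surjective _ m
      obtain ⟨N, hN⟩ := hm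
      have key : ∀ N, ∀ m : M, (∀ s, x s ^ N • m ∈ gam x M) → m ∈ gam x M := by
        intro N m h
        choose N' hN' using h
        refine ⟨(∑ s, N' s) + N, fun s => ?_⟩
        have h1 : N' s ≤ ∑ s, N' s :=
          Finset.single_le_sum (fun _ _ => Nat.zero_le _) (Finset.mem_univ s)
        rw [pow_add, mul_smul, ← Nat.sub_add_cancel h1, pow_add, mul_smul, hN', smul_zero]
      rw [Submodule.mem_bot, Submodule.mkQ_apply, Submodule.Quotient.mk_eq_zero]
      refine key N m fun s => ?_
      have := hN s
      rwa [Submodule.mkQ_apply, ← Submodule.Quotient.mk_smul, Submodule.Quotient.mk_eq_zero] at this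
    obtain ⟨y, hyI, hy⟩ := exists_regular x M' hg
    intro t z hz
    -- some power of `y` lies in the ideal of the `x_s^t`, which kills the class of `z`
    obtain ⟨N, w, hw⟩ : ∃ N : ℕ, ∃ w, kd x t p w = y ^ N • z := by
      let J : Ideal S :=
        (LinearMap.range (kdL M' x t p)).colon {z}
      have hJ : ∀ a, a ∈ J ↔ ∃ w, kd x t p w = a • z := fun a => by
        rw [Submodule.mem_colon_singleton]; rfl
      have hrad : y ∈ J.radical := by
        have : Ideal.span (Set.range x) ≤ J.radical := by
          rw [Ideal.span_le]
          rintro _ ⟨s, rfl⟩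
          exact ⟨t, (hJ _).2 (exists_kd_eq_pow_smul x t p s z hz)⟩
        exact this hyI
      obtain ⟨N, hN⟩ := hrad
      exact ⟨N, (hJ _).1 hN⟩
    set Y := y ^ N
    have hY : IsSMulRegular M' Y := hy.pow N
    have hlt : Module.supportDim S (QuotSMulTop Y M') < (p : WithBot ℕ∞) := by
      have h1 := Module.supportDim_quotSMulTop_succ_le_of_notMem_minimalPrimes (R := S) (M := M')
        (x := Y) (fun _ => hY.notMem_of_mem_minimalPrimes)
      have h2 := h1.trans_lt h'
      generalize Module.supportDim S (QuotSMulTop Y M') = D at h2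
      induction D with
      | bot => exact WithBot.bot_lt_coe _
      | coe D =>
        have h3 : D + 1 < ((p + 1 : ℕ) : ℕ∞) := WithBot.coe_lt_coe.1 h2
        rw [Nat.cast_add_one] at h3
        exact WithBot.coe_lt_coe.2 (lt_of_add_lt_add_right h3)
    let π : M' →ₗ[S] QuotSMulTop Y M' := Submodule.mkQ _
    have hπ : ∀ {i : ℕ} (c : KCochain M' n i), kmap π c = 0 → ∃ c', c = Y • c' := by
      intro i c hc
      have : ∀ T, ∃ m, c T = Y • m := fun T => by
        have := congrFun hc T
        simp only [kmap, π, Submodule.mkQ_apply, Pi.zero_apply, Submodule.Quotient.mk_eq_zero] at this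
        obtain ⟨m, -, hm⟩ := (Submodule.mem_smul_pointwise_iff_exists _ _ _).1 this
        exact ⟨m, hm.symm⟩
      choose c' hc' using this
      exact ⟨c', funext hc'⟩
    obtain ⟨u, hu⟩ := ih (QuotSMulTop Y M') hlt t (kmap π w) (by
      rw [kd_kmap, hw]
      funext T
      simp only [kmap, Pi.smul_apply, π, Submodule.mkQ_apply, Pi.zero_apply,
        Submodule.Quotient.mk_eq_zero]
      exact Submodule.smul_mem_pointwise_smul _ _ _ trivial)
    refine ⟨u, ?_⟩
    -- the pushed `w` is a coboundary plus a multiple of `Y`, so `Y` cancels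
    have hdec : ∃ w', kd x (t + u) p (kpush x u p w) = Y • kd x (t + u) p w' := by
      rw [kpush_kmap] at hu
      cases p with
      | zero =>
        obtain ⟨w', hw'⟩ := hπ _ hu
        exact ⟨w', by rw [hw']; exact (kdL M' x (t + u) 0).map_smul Y w'⟩
      | succ p =>
        obtain ⟨v', hv'⟩ := hu
        obtain ⟨v, rfl⟩ := kmap_surj π (Submodule.mkQ_surjective _) v'
        obtain ⟨w', hw'⟩ := hπ (kpush x u (p + 1) w - kd x (t + u) p v) (by
          rw [kd_kmap] at hv'
          funext T
          have := congrFun hv' T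
          simp only [kmap] at this
          simp [kmap, this])
        refine ⟨w', ?_⟩
        have := congrArg (kdL M' x (t + u) (p + 1)) hw'
        rw [map_sub, map_smul] at this
        simpa [kd_kd] using this
    obtain ⟨w', hw'⟩ := hdec
    refine ⟨w', ?_⟩
    rw [kd_kpush, hw] at hw'
    have e : kpush x u (p + 1) (Y • z) = Y • kpush x u (p + 1) z :=
      (kpushL M' x u (p + 1)).map_smul Y z
    rw [e] at hw'
    funext T
    exact (hY (congrFun hw' T)).symm
end Van

/-! ### Gradings and minimal resolutions -/

section Grad
variable {S : Type} [CommRing S] {𝒜 : ℤ → AddSubgroup S}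

/-- Additive projections `ρ c` of `N` onto the pieces `𝒩 c` of a grading, compatible with
multiplication by homogeneous elements of `S`. -/
structure GProj (𝒜 : ℤ → AddSubgroup S) {N : Type} [AddCommGroup N] [Module S N]
    (𝒩 : ℤ → AddSubgroup N) where
  ρ : ℤ → N →+ N
  mem : ∀ c n, ρ c n ∈ 𝒩 c
  fix : ∀ c n, n ∈ 𝒩 c → ρ c n = n
  off : ∀ c c' n, n ∈ 𝒩 c → c ≠ c' → ρ c' n = 0
  smul : ∀ e c (s : S) (n : N), s ∈ 𝒜 e → ρ (e + c) (s • n) = s • ρ c n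

theorem IsGradedMod.exists_gproj {N : Type} [AddCommGroup N] [Module S N]
    {𝒩 : ℤ → AddSubgroup N} (h : IsGradedMod 𝒜 𝒩) : Nonempty (GProj 𝒜 𝒩) := by
  classical
  let _ := h.internal.chooseDecomposition
  have fix : ∀ c n, n ∈ 𝒩 c → (DirectSum.decompose 𝒩 n c : N) = n := fun c n hn =>
    DirectSum.decompose_of_mem_same 𝒩 hn
  refine ⟨⟨fun c => (𝒩 c).subtype.comp
    ((DFinsupp.evalAddMonoidHom c).comp (DirectSum.decomposeAddEquiv 𝒩).toAddMonoidHom),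
    fun c n => SetLike.coe_mem _, fix,
    fun c c' n hn hc => DirectSum.decompose_of_mem_ne 𝒩 hn hc, ?_⟩⟩
  intro e c s n hs
  change (DirectSum.decompose 𝒩 (s • n) (e + c) : N) = s • (DirectSum.decompose 𝒩 n c : N)
  induction n using DirectSum.Decomposition.inductionOn 𝒩 with
  | zero => simp
  | @homogeneous i m =>
    have h1 : s • (m : N) ∈ 𝒩 (e + i) := h.smul_mem hs m.2
    by_cases hi : i = c
    · subst hi
      rw [fix _ _ h1, fix _ _ m.2]
    · rw [DirectSum.decompose_of_mem_ne 𝒩 h1 (by omega), DirectSum.decompose_of_mem_ne 𝒩 m.2 hi,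
        smul_zero]
  | add m m' h1 h2 =>
    rw [smul_add, DirectSum.decompose_add, DirectSum.decompose_add, DirectSum.add_apply,
      DirectSum.add_apply, AddSubgroup.coe_add, AddSubgroup.coe_add, h1, h2, smul_add]

/-- The grading of `⊕_a N(-deg a)`. -/
def piG {N ι : Type} [AddCommGroup N] (deg : ι → ℤ) (𝒩 : ℤ → AddSubgroup N) (c : ℤ) :
    AddSubgroup (ι → N) :=
  AddSubgroup.pi Set.univ (fun a => 𝒩 (c - deg a))

lemma mem_piG {N ι : Type} [AddCommGroup N] {deg : ι → ℤ} {𝒩 : ℤ → AddSubgroup N} {c : ℤ}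
    {z : ι → N} : z ∈ piG deg 𝒩 c ↔ ∀ a, z a ∈ 𝒩 (c - deg a) := by
  simp [piG, AddSubgroup.mem_pi]

/-- The projections of `⊕_a N(-deg a)` onto its graded pieces. -/
def GProj.shift {N ι : Type} [AddCommGroup N] [Module S N] {𝒩 : ℤ → AddSubgroup N}
    (G : GProj 𝒜 𝒩) (deg : ι → ℤ) : GProj 𝒜 (piG deg 𝒩) where
  ρ c :=
    { toFun := fun z a => G.ρ (c - deg a) (z a)
      map_zero' := by funext a; simp
      map_add' := fun y z => by funext a; simp }
  mem c z := mem_piG.2 fun a => G.mem _ _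
  fix c z hz := funext fun a => G.fix _ _ (mem_piG.1 hz a)
  off c c' z hz hc := funext fun a => G.off _ _ _ (mem_piG.1 hz a) (by simpa using hc)
  smul e c s z hs := by
    funext a
    change G.ρ (e + c - deg a) (s • z a) = s • G.ρ (c - deg a) (z a)
    rw [add_sub_assoc, G.smul _ _ _ _ hs]

lemma GProj.shift_apply {N ι : Type} [AddCommGroup N] [Module S N] {𝒩 : ℤ → AddSubgroup N}
    (G : GProj 𝒜 𝒩) (deg : ι → ℤ) (c : ℤ) (z : ι → N) (a : ι) :
    (G.shift deg).ρ c z a = G.ρ (c - deg a) (z a) := rfl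

namespace GFC
variable (F : GFC 𝒜) {N : Type} [AddCommGroup N] [Module S N]

lemma tmap_apply_s7 (i : ℕ) (z : Fin (F.r (i + 1)) → N) (b : Fin (F.r i)) :
    F.tmap N i z b = ∑ a, F.mat i a b • z a := rfl

/-- The differentials of `F_• ⊗ N` respect internal degrees. -/
lemma tmap_ρ {𝒩 : ℤ → AddSubgroup N} (G : GProj 𝒜 𝒩) (i : ℕ) (c : ℤ)
    (z : Fin (F.r (i + 1)) → N) :
    (G.shift (F.deg i)).ρ c (F.tmap N i z) = F.tmap N i ((G.shift (F.deg (i + 1))).ρ c z) := by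
  funext b
  simp only [GProj.shift_apply, tmap_apply_s7, map_sum]
  refine Finset.sum_congr rfl fun a _ => ?_
  rw [← G.smul _ _ _ _ (F.mat_mem i a b)]
  congr 2
  ring

/-- Naturality of `F_• ⊗ N` in `N`. -/
lemma tmap_map_s7 {N' : Type} [AddCommGroup N'] [Module S N'] (φ : N →ₗ[S] N') (i : ℕ)
    (z : Fin (F.r (i + 1)) → N) :
    F.tmap N' i (fun a => φ (z a)) = fun b => φ (F.tmap N i z b) := by
  funext b
  simp [tmap_apply_s7, map_sum]

lemma tmap_pi {ι : Type} (i : ℕ) (z : Fin (F.r (i + 1)) → ι → N) (b : Fin (F.r i)) (c : ι) :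
    F.tmap (ι → N) i z b c = F.tmap N i (fun a => z a c) b := by
  simp [tmap_apply_s7, Finset.sum_apply]

lemma tmap_tmap_s7 (i : ℕ) (z : Fin (F.r (i + 2)) → N) :
    F.tmap N i (F.tmap N (i + 1) z) = 0 := by
  funext c
  simp only [tmap_apply_s7, Finset.smul_sum, smul_smul, Pi.zero_apply]
  rw [Finset.sum_comm]
  refine Finset.sum_eq_zero fun a _ => ?_
  rw [← Finset.sum_smul, F.comp_eq_zero i a c, zero_smul]

lemma tmap_mem_cyc (i : ℕ) (z : Fin (F.r (i + 1)) → N) : F.tmap N i z ∈ F.cyc N i := by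
  cases i with
  | zero => trivial
  | succ i => exact F.tmap_tmap_s7 i z

lemma map_mem_cyc {N' : Type} [AddCommGroup N'] [Module S N'] (φ : N →ₗ[S] N') (i : ℕ)
    (z : Fin (F.r i) → N) (hz : z ∈ F.cyc N i) : (fun a => φ (z a)) ∈ F.cyc N' i := by
  cases i with
  | zero => trivial
  | succ i =>
    have h : F.tmap N i z = 0 := hz
    change F.tmap N' i _ = 0
    rw [F.tmap_map_s7, h]
    funext b; simp

end GFC

namespace MGFR
variable {P : Type} [AddCommGroup P] [Module S P] {𝒬 : ℤ → AddSubgroup P} {m0 : Set S}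
  (F : MGFR 𝒜 𝒬 m0)

lemma exact_free_succ {ι : Type} (i : ℕ) (z : Fin (F.r (i + 1)) → ι → S)
    (hz : F.tmap (ι → S) i z = 0) : ∃ w, F.tmap (ι → S) (i + 1) w = z := by
  have : ∀ c, ∃ w : Fin (F.r (i + 2)) → S, F.tmap S (i + 1) w = fun a => z a c := fun c =>
    (F.exact_succ i (fun a => z a c)).1 (by
      funext b
      have := congrFun (congrFun hz b) c
      rwa [F.tmap_pi] at this)
  choose w hw using this
  refine ⟨fun a c => w c a, ?_⟩
  funext b c
  rw [F.tmap_pi, hw]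

lemma exact_free_zero {ι : Type} (z : Fin (F.r 0) → ι → S)
    (hz : ∀ c, ∑ a, z a c • F.augm a = 0) : ∃ w, F.tmap (ι → S) 0 w = z := by
  have : ∀ c, ∃ w : Fin (F.r 1) → S, F.tmap S 0 w = fun a => z a c := fun c =>
    (F.exact_zero (fun a => z a c)).1 (hz c)
  choose w hw using this
  refine ⟨fun a c => w c a, ?_⟩
  funext b c
  rw [F.tmap_pi, hw]

/-- An element `s` annihilating `P` is null-homotopic on a resolution of `P`: there is a matrix `h`
with `∂ h = s` on cycles, whatever the coefficients. -/
lemma exists_homotopy (s : S) (hs : ∀ m : P, s • m = 0) : ∀ q : ℕ,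
    ∃ h : Fin (F.r q) → Fin (F.r (q + 1)) → S, ∀ (N : Type) [AddCommGroup N] [Module S N]
      (z : Fin (F.r q) → N), z ∈ F.cyc N q → F.tmap N q (fun b => ∑ a, h a b • z a) = s • z := by
  -- exchanging the order of summation in `∂ (h z)`
  have swap : ∀ (q : ℕ) (N : Type) [AddCommGroup N] [Module S N]
      (h : Fin (F.r q) → Fin (F.r (q + 1)) → S) (z : Fin (F.r q) → N) (d : Fin (F.r q)),
      F.tmap N q (fun b => ∑ a, h a b • z a) d = ∑ a, F.tmap S q (h a) d • z a := by
    intro q N _ _ h z d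
    simp only [GFC.tmap_apply_s7, Finset.smul_sum, Finset.sum_smul, smul_smul, smul_eq_mul]
    exact Finset.sum_comm
  intro q
  induction q with
  | zero =>
    have : ∀ a, ∃ w : Fin (F.r 1) → S, F.tmap S 0 w = Pi.single a s := fun a =>
      (F.exact_zero (Pi.single a s)).1 (by
        rw [Finset.sum_eq_single a]
        · simp [hs]
        · intro b _ hb; simp [hb]
        · simp)
    choose h hh using this
    refine ⟨h, fun N _ _ z _ => ?_⟩
    funext d
    rw [swap]
    simp only [hh, Pi.single_apply, ite_smul, zero_smul, Pi.smul_apply]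
    simp
  | succ q ih =>
    obtain ⟨h, hh⟩ := ih
    have : ∀ a, ∃ w : Fin (F.r (q + 2)) → S, F.tmap S (q + 1) w =
        Pi.single a s - fun c => ∑ b, h b c • F.mat q a b := fun a =>
      (F.exact_succ q _).1 (by
        have hc : F.mat q a ∈ F.cyc S q := by
          cases q with
          | zero => trivial
          | succ q => exact funext fun c => F.comp_eq_zero q a c
        change F.tmap S q _ = 0
        rw [map_sub, hh S _ hc]
        funext b
        simp [GFC.tmap_apply_s7, Pi.single_apply, mul_comm])
    choose h' hh' using this
    refine ⟨h', fun N _ _ z hz => ?_⟩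
    have hz' : ∀ b, ∑ a, F.mat q a b • z a = 0 := fun b => congrFun (show F.tmap N q z = 0 from hz) b
    funext d
    rw [swap]
    simp only [hh', Pi.sub_apply, sub_smul, Finset.sum_sub_distrib, Pi.smul_apply]
    have e2 : ∑ a, (∑ b, h b d • F.mat q a b) • z a = 0 := by
      simp only [Finset.sum_smul, smul_eq_mul, mul_smul]
      rw [Finset.sum_comm]
      refine Finset.sum_eq_zero fun b _ => ?_
      rw [← Finset.smul_sum, hz', smul_zero]
    rw [e2]
    simp [Pi.single_apply]

lemma smul_mem_bdry (s : S) (hs : ∀ m : P, s • m = 0) (q : ℕ) {N : Type} [AddCommGroup N]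
    [Module S N] (z : Fin (F.r q) → N) (hz : z ∈ F.cyc N q) : s • z ∈ F.bdry N q := by
  obtain ⟨h, hh⟩ := F.exists_homotopy s hs q
  exact ⟨_, hh N z hz⟩

end MGFR

section Minimal
variable (hSG : IsStdGraded 𝒜)
include hSG

lemma IsStdGraded.isGradedMod : IsGradedMod 𝒜 𝒜 := ⟨hSG.internal, hSG.mul_mem⟩

lemma IsStdGraded.one_notMem [Nontrivial S] : (1 : S) ∉ sPlus 𝒜 := by
  classical
  obtain ⟨G⟩ := hSG.isGradedMod.exists_gproj
  let _ := hSG.internal.chooseDecomposition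
  have h0 : ∀ s ∈ sPlus 𝒜, ∀ c ≤ 0, G.ρ c s = 0 := by
    intro s hs
    refine Submodule.span_induction ?_ ?_ ?_ ?_ hs
    · rintro s ⟨i, hi, hs⟩ c hc
      exact G.off i c s hs (by omega)
    · intro c _; exact map_zero _
    · intro a b _ _ ha hb c hc
      rw [map_add, ha c hc, hb c hc, add_zero]
    · intro a b _ hb c hc
      induction a using DirectSum.Decomposition.inductionOn 𝒜 with
      | zero => simp
      | @homogeneous i m =>
        rcases lt_or_ge i 0 with hi | hi
        · have : (m : S) = 0 := by
            rw [← AddSubgroup.mem_bot, ← hSG.bot_of_neg i hi]; exact m.2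
          rw [this, zero_smul, map_zero]
        · rw [← add_sub_cancel i c, G.smul _ _ _ _ m.2, hb _ (by omega), smul_zero]
      | add m m' h1 h2 => rw [add_smul, map_add, h1, h2, add_zero]
  intro h
  have := h0 1 h 0 le_rfl
  rw [G.fix 0 1 hSG.one_mem] at this
  exact one_ne_zero this

/-- Off degree zero, a homogeneous element lies in the irrelevant ideal. -/
lemma IsStdGraded.mem_sPlus {e : ℤ} {s : S} (hs : s ∈ 𝒜 e) (he : e ≠ 0) : s ∈ sPlus 𝒜 := by
  rcases lt_or_gt_of_ne he with h | h
  · rw [hSG.bot_of_neg e h, AddSubgroup.mem_bot] at hs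
    rw [hs]; exact zero_mem _
  · exact Ideal.subset_span ⟨e, h, hs⟩

/-- The entries of a minimal complex lie in the irrelevant ideal. -/
lemma IsStdGraded.mat_mem_sPlus {P : Type} [AddCommGroup P] [Module S P] {𝒬 : ℤ → AddSubgroup P}
    (F : MGFR 𝒜 𝒬 ({0} : Set S)) (i : ℕ) (a b) : F.mat i a b ∈ sPlus 𝒜 := by
  by_cases h : F.deg (i + 1) a = F.deg i b
  · have : F.mat i a b = 0 := F.minimal i a b h
    rw [this]; exact zero_mem _
  · exact hSG.mem_sPlus (F.mat_mem i a b) (sub_ne_zero.2 h)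

lemma IsStdGraded.qmPiece_eq_zero {e : ℤ} {m : S ⧸ (sPlus 𝒜 : Submodule S S)}
    (hm : m ∈ qmPiece (sPlus 𝒜 : Submodule S S) 𝒜 e) (he : e ≠ 0) : m = 0 := by
  obtain ⟨s, hs, rfl⟩ := hm
  exact (Submodule.Quotient.mk_eq_zero _).2 (hSG.mem_sPlus hs he)

end Minimal

lemma sPlus_smul {s : S} (hs : s ∈ sPlus 𝒜) (m : S ⧸ (sPlus 𝒜 : Submodule S S)) : s • m = 0 := by
  obtain ⟨a, rfl⟩ := Submodule.mkQ_surjective _ m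
  rw [Submodule.mkQ_apply, ← Submodule.Quotient.mk_smul, Submodule.Quotient.mk_eq_zero, smul_eq_mul]
  exact Ideal.mul_mem_right _ _ hs

end Grad

/-! ### Staircases in the double complex of a resolution and the Koszul cocomplexes -/

section Zig
variable {S : Type} [CommRing S] {𝒜 : ℤ → AddSubgroup S} {n : ℕ} {M : Type} [AddCommGroup M]
  [Module S M] {ℳ : ℤ → AddSubgroup M}

/-- Internal degree `j` elements of `F_q ⊗ K^p(x^t; M)`. -/
def KHom (ℳ : ℤ → AddSubgroup M) (F : GFC 𝒜) (t p q : ℕ) (j : ℤ)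
    (z : Fin (F.r q) → KCochain M n p) : Prop :=
  ∀ b, kStrand ℳ t p (j - F.deg q b) (z b)

/-- The projections onto internal degrees of the level `t` Koszul cocomplex. -/
def GProj.kos (G : GProj 𝒜 ℳ) (n t p : ℕ) :=
  G.shift (ι := {T : Finset (Fin n) // T.card = p}) (fun _ => -((t * p : ℕ) : ℤ))

lemma kStrand_iff (t p : ℕ) (j : ℤ) (z : KCochain M n p) :
    kStrand ℳ t p j z ↔
      z ∈ piG (fun _ : {T : Finset (Fin n) // T.card = p} => -((t * p : ℕ) : ℤ)) ℳ j := by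
  rw [mem_piG]
  simp only [sub_neg_eq_add]
  rfl

lemma GProj.kos_kd (G : GProj 𝒜 ℳ) (x : Fin n → S)
    (hpow : ∀ (s : Fin n) (t : ℕ), x s ^ t ∈ 𝒜 (t : ℤ)) (t p : ℕ) (c : ℤ) (z : KCochain M n p) :
    (G.kos n t (p + 1)).ρ c (kd x t p z) = kd x t p ((G.kos n t p).ρ c z) := by
  funext T
  simp only [kd, GProj.kos, GProj.shift_apply, map_sum, map_zsmul]
  refine Finset.sum_congr rfl fun s _ => ?_
  rw [← G.smul _ _ _ _ (hpow s.1 t)]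
  congr 3
  push_cast
  ring

lemma kStrand_kpush (hgm : IsGradedMod 𝒜 ℳ) (x : Fin n → S)
    (hprod : ∀ (u : ℕ) (T : Finset (Fin n)), ∏ s ∈ T, x s ^ u ∈ 𝒜 ((u * T.card : ℕ) : ℤ))
    (t u p : ℕ) (j : ℤ) (z : KCochain M n p) (hz : kStrand ℳ t p j z) :
    kStrand ℳ (t + u) p j (kpush x u p z) := by
  intro T
  have h := hgm.smul_mem (hprod u T.1) (hz T)
  rw [T.2] at h
  have e : j + (((t + u) * p : ℕ) : ℤ) = ((u * p : ℕ) : ℤ) + (j + ((t * p : ℕ) : ℤ)) := by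
    push_cast; ring
  rw [e]
  exact h

lemma kStrand_kd (hgm : IsGradedMod 𝒜 ℳ) (x : Fin n → S)
    (hpow : ∀ (s : Fin n) (t : ℕ), x s ^ t ∈ 𝒜 (t : ℤ))
    (t p : ℕ) (j : ℤ) (z : KCochain M n p) (hz : kStrand ℳ t p j z) :
    kStrand ℳ t (p + 1) j (kd x t p z) := by
  intro T
  refine AddSubgroup.sum_mem _ fun s _ => AddSubgroup.zsmul_mem _ ?_ _
  have h := hgm.smul_mem (hpow s.1 t) (hz ⟨T.1.erase s.1, by
        rw [Finset.card_erase_of_mem s.2, T.2]; rfl⟩)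
  have e : j + ((t * (p + 1) : ℕ) : ℤ) = (t : ℤ) + (j + ((t * p : ℕ) : ℤ)) := by
    push_cast; ring
  rw [e]
  exact h

lemma IsStdGraded.pow_mem (hSG : IsStdGraded 𝒜) {s : S} (hs : s ∈ 𝒜 1) (t : ℕ) :
    s ^ t ∈ 𝒜 (t : ℤ) := by
  induction t with
  | zero => simpa using hSG.one_mem
  | succ t ih =>
    rw [pow_succ]
    exact_mod_cast hSG.mul_mem ih hs

lemma IsStdGraded.prod_pow_mem (hSG : IsStdGraded 𝒜) {x : Fin n → S} (hx : ∀ i, x i ∈ 𝒜 1)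
    (u : ℕ) (T : Finset (Fin n)) : ∏ s ∈ T, x s ^ u ∈ 𝒜 ((u * T.card : ℕ) : ℤ) := by
  induction T using Finset.induction_on with
  | empty => simpa using hSG.one_mem
  | insert a T ha ih =>
    rw [Finset.prod_insert ha, Finset.card_insert_of_notMem ha]
    have := hSG.mul_mem (hSG.pow_mem (hx a) u) ih
    have e : ((u * (T.card + 1) : ℕ) : ℤ) = (u : ℤ) + ((u * T.card : ℕ) : ℤ) := by
      push_cast; ring
    rw [e]
    exact this

/-- A preimage of a homogeneous element under the differential of `F_• ⊗ K^p` can be chosen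
homogeneous. -/
lemma exists_KHom_preimage (G : GProj 𝒜 ℳ) (F : GFC 𝒜) (t p q : ℕ) (j : ℤ)
    (y : Fin (F.r q) → KCochain M n p) (hy : KHom ℳ F t p q j y)
    (h : ∃ w, F.tmap _ q w = y) : ∃ w, F.tmap _ q w = y ∧ KHom ℳ F t p (q + 1) j w := by
  obtain ⟨w, hw⟩ := h
  refine ⟨((G.kos n t p).shift (F.deg (q + 1))).ρ j w, ?_, fun b => ?_⟩
  · rw [← F.tmap_ρ, hw]
    exact GProj.fix _ _ _ (mem_piG.2 fun b => (kStrand_iff _ _ _ _).1 (hy b))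
  · rw [kStrand_iff]
    exact mem_piG.1 (GProj.mem _ _ _) b

/-- The degree `j` strand of the double complexes `F_q ⊗ K^p(x^t; M)`: a staircase of elements
`c_p ∈ F_{i+p} ⊗ K^p` with `d c_p = ∂ c_{p+1}` for `p < m`. -/
structure Stair (x : Fin n → S) (ℳ : ℤ → AddSubgroup M) (F : GFC 𝒜) (i : ℕ) (j : ℤ) (m t : ℕ)
    (c : ∀ p, Fin (F.r (i + p)) → KCochain M n p) : Prop where
  hom : ∀ p, KHom ℳ F t p (i + p) j (c p)
  rel : ∀ p < m, (fun b => kdL M x t p (c p b)) = F.tmap (KCochain M n (p + 1)) (i + p) (c (p + 1))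

/-- Applying a transition map to a staircase. -/
noncomputable def pushStair (x : Fin n → S) (F : GFC 𝒜) (i u : ℕ)
    (c : ∀ p, Fin (F.r (i + p)) → KCochain M n p) : ∀ p, Fin (F.r (i + p)) → KCochain M n p :=
  fun p b => kpushL M x u p (c p b)

lemma pushStair_zero (x : Fin n → S) (F : GFC 𝒜) (i u : ℕ)
    (c : ∀ p, Fin (F.r (i + p)) → KCochain M n p) : pushStair x F i u c 0 = c 0 :=
  funext fun b => kpush_zero_deg x u (c 0 b)

/-- A transition map turns cycles of `F_• ⊗ K^{p+1}` into boundaries, since each `x_s` annihilates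
`Tor(P, M)`. -/
lemma push_mem_bdry {x : Fin n → S} {P : Type} [AddCommGroup P] [Module S P] {𝒬 : ℤ → AddSubgroup P}
    {m0 : Set S} (F : MGFR 𝒜 𝒬 m0) (hP : ∀ s, ∀ m : P, x s • m = 0) (p q : ℕ)
    (y : Fin (F.r q) → KCochain M n (p + 1)) (hy : y ∈ F.cyc _ q) :
    ∃ w, F.tmap _ q w = fun b => kpushL M x 1 (p + 1) (y b) := by
  have : ∀ T : {T : Finset (Fin n) // T.card = p + 1}, ∃ w, F.tmap M q w =
      fun b => (∏ s ∈ T.1, x s ^ 1) • y b T := by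
    intro T
    obtain ⟨s, hs⟩ : T.1.Nonempty := by
      rw [← Finset.card_pos, T.2]; omega
    have h1 := F.map_mem_cyc (LinearMap.proj T : KCochain M n (p + 1) →ₗ[S] M) q y hy
    have h2 := (F.bdry M q).smul_mem (∏ s ∈ T.1.erase s, x s ^ 1)
      (F.smul_mem_bdry (x s) (hP s) q _ h1)
    obtain ⟨w, hw⟩ := h2
    refine ⟨w, hw.trans ?_⟩
    funext b
    rw [Pi.smul_apply, Pi.smul_apply, smul_smul, ← Finset.prod_erase_mul _ _ hs, pow_one]
    rfl
  choose w hw using this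
  refine ⟨fun a T => w T a, ?_⟩
  funext b T
  rw [F.tmap_pi, hw]
  rfl

/-- The differentials of `F_• ⊗ K^p` preserve internal degrees. -/
lemma KHom_tmap (hgm : IsGradedMod 𝒜 ℳ) (F : GFC 𝒜) (t p q : ℕ) (j : ℤ)
    (w : Fin (F.r (q + 1)) → KCochain M n p) (hw : KHom ℳ F t p (q + 1) j w) :
    KHom ℳ F t p q j (F.tmap _ q w) := by
  intro b T
  rw [F.tmap_pi, F.tmap_apply_s7]
  refine AddSubgroup.sum_mem _ fun a _ => ?_
  have h := hgm.smul_mem (F.mat_mem q a b) (hw a T)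
  have e : j - F.deg q b + ((t * p : ℕ) : ℤ) =
      F.deg (q + 1) a - F.deg q b + (j - F.deg (q + 1) a + ((t * p : ℕ) : ℤ)) := by ring
  rw [e]
  exact h

variable (hSG : IsStdGraded 𝒜) (hgm : IsGradedMod 𝒜 ℳ) {x : Fin n → S} (hx : ∀ i, x i ∈ 𝒜 1)
include hSG hgm hx

lemma Stair.push {F : GFC 𝒜} {i : ℕ} {j : ℤ} {m t : ℕ}
    {c : ∀ p, Fin (F.r (i + p)) → KCochain M n p} (h : Stair x ℳ F i j m t c) (u : ℕ) :
    Stair x ℳ F i j m (t + u) (pushStair x F i u c) where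
  hom p b := kStrand_kpush hgm x (hSG.prod_pow_mem hx) _ _ _ _ _ (h.hom p b)
  rel p hp := by
    have := h.rel p hp
    simp only [pushStair]
    refine Eq.trans ?_ (F.tmap_map_s7 (kpushL M x u (p + 1)) (i + p) (c (p + 1))).symm
    rw [← this]
    funext b
    exact kd_kpush x t u p (c p b)

/-- A degree `j` cycle of `F_• ⊗ K^0 = F_• ⊗ M` is the foot of arbitrarily long staircases: the
Koszul differential of the last step is a cycle for `∂`, and raising the exponent by one makes it a
boundary. -/
lemma exists_stair {P : Type} [AddCommGroup P] [Module S P] {𝒬 : ℤ → AddSubgroup P}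
    {m0 : Set S} (F : MGFR 𝒜 𝒬 m0) (hP : ∀ s, ∀ m : P, x s • m = 0) (i : ℕ) (j : ℤ)
    (c₀ : Fin (F.r i) → KCochain M n 0) (h0 : c₀ ∈ F.cyc _ i) (hc₀ : KHom ℳ F.toGFC 0 0 i j c₀)
    (m : ℕ) :
    ∃ t c, Stair x ℳ F.toGFC i j m t c ∧ c 0 = c₀ := by
  obtain ⟨G⟩ := hgm.exists_gproj
  induction m with
  | zero =>
    -- entries beyond the length of a staircase carry no relation and are set to zero
    refine ⟨0, Function.update 0 0 c₀, ⟨fun p => ?_, fun p hp => absurd hp (by omega)⟩,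
      Function.update_self ..⟩
    cases p with
    | zero => rw [Function.update_self]; exact hc₀
    | succ p =>
      rw [Function.update_of_ne (by omega)]
      intro b T
      exact zero_mem _
  | succ m ih =>
    obtain ⟨t, c, hc, hc0⟩ := ih
    have hcyc : (fun b => kdL M x t m (c m b)) ∈ F.cyc (KCochain M n (m + 1)) (i + m) := by
      cases m with
      | zero => exact F.map_mem_cyc _ _ _ (by rw [hc0]; exact h0)
      | succ m =>
        change F.tmap _ (i + m) _ = 0
        refine (F.tmap_map_s7 (kdL M x t (m + 1)) (i + m) (c (m + 1))).trans ?_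
        rw [← hc.rel m (Nat.lt_succ_self m)]
        funext b
        exact kd_kd x t m (c m b)
    obtain ⟨w, hw, hwh⟩ := exists_KHom_preimage G F.toGFC (t + 1) (m + 1) (i + m) j _
      (fun b => kStrand_kpush hgm x (hSG.prod_pow_mem hx) t 1 _ _ _
        (kStrand_kd hgm x (fun s => hSG.pow_mem (hx s)) _ _ _ _ (hc.hom m b)))
      (push_mem_bdry F hP m (i + m) _ hcyc)
    have hc' := hc.push hSG hgm hx 1
    refine ⟨t + 1, Function.update (pushStair x F.toGFC i 1 c) (m + 1) w, ⟨fun p => ?_, fun p hp => ?_⟩, ?_⟩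
    · by_cases h : p = m + 1
      · subst h; rw [Function.update_self]; exact hwh
      · rw [Function.update_of_ne h]; exact hc'.hom p
    · rw [Function.update_of_ne (by omega)]
      by_cases h : p = m
      · subst h
        rw [Function.update_self, hw]
        funext b
        exact kd_kpush x t 1 p (c p b)
      · rw [Function.update_of_ne (by omega)]
        exact hc'.rel p (by omega)
    · rw [Function.update_of_ne (by omega), pushStair_zero, hc0]

/-- If the relevant local cohomology vanishes, a staircase that ends in zero can be shortened
without changing the class of its foot. -/
lemma stair_descend (F : GFC 𝒜) (i : ℕ) (j : ℤ)
    (hlc : ∀ p b, ¬ lcNZ x ℳ p (j - F.deg (i + p) b)) (c₀ : Fin (F.r i) → KCochain M n 0)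
    (m : ℕ) : (∃ t c, Stair x ℳ F i j m t c ∧ c m = 0 ∧ c 0 - c₀ ∈ F.bdry _ i) →
      c₀ ∈ F.bdry _ i := by
  obtain ⟨G⟩ := hgm.exists_gproj
  have hpow := fun s => hSG.pow_mem (hx s)
  induction m with
  | zero =>
    rintro ⟨t, c, -, h1, h2⟩
    rw [h1, zero_sub] at h2
    exact (Submodule.neg_mem_iff _).1 h2
  | succ m ih =>
    rintro ⟨t, c, hc, hm, h0⟩
    apply ih
    -- `c_{m+1} = 0` makes `c_m` a Koszul cocycle, which dies at a higher exponent
    have hker : ∀ b, kd x t m (c m b) = 0 := fun b => by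
      have := hc.rel m (Nat.lt_succ_self m)
      rw [hm, map_zero] at this
      exact congrFun this b
    have : ∀ b, ∃ u, kIsCobound x (t + u) m (kpush x u m (c m b)) := fun b => by
      by_contra hcon
      push Not at hcon
      exact hlc m b ⟨t, c m b, hc.hom m b, hker b, hcon⟩
    choose u' hu' using this
    obtain ⟨u, hu⟩ : ∃ u, ∀ b, kIsCobound x (t + u) m (kpush x u m (c m b)) := by
      refine ⟨∑ b, u' b, fun b => ?_⟩
      have h1 : u' b ≤ ∑ b, u' b :=
        Finset.single_le_sum (fun _ _ => Nat.zero_le _) (Finset.mem_univ b)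
      obtain ⟨v, hv⟩ := Nat.exists_eq_add_of_le h1
      rw [hv, ← add_assoc, ← kpush_kpush]
      exact kIsCobound_push x _ _ _ _ (hu' b)
    have hc' := hc.push hSG hgm hx u
    cases m with
    | zero =>
      refine ⟨t, c, ⟨hc.hom, fun p hp => absurd hp (by omega)⟩, ?_, h0⟩
      funext b
      have : kpush x u 0 (c 0 b) = 0 := hu b
      rwa [kpush_zero_deg] at this
    | succ m =>
      have : ∀ b, ∃ w, kd x (t + u) m w = kpush x u (m + 1) (c (m + 1) b) ∧
          kStrand ℳ (t + u) m (j - F.deg (i + (m + 1)) b) w := fun b => by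
        obtain ⟨w, hw⟩ := hu b
        refine ⟨(G.kos n (t + u) m).ρ _ w, ?_, (kStrand_iff _ _ _ _).2 (GProj.mem _ _ _)⟩
        rw [← G.kos_kd x hpow, hw]
        exact GProj.fix _ _ _ ((kStrand_iff _ _ _ _).1 (hc'.hom (m + 1) b))
      choose w hw hwh using this
      have hrel := hc'.rel m (by omega)
      have hwrel : (fun b => kdL M x (t + u) m (F.tmap _ (i + m) w b)) =
          F.tmap _ (i + m) (pushStair x F i u c (m + 1)) := by
        rw [← F.tmap_map_s7]
        congr 1
        funext b
        exact hw b
      -- with `c_{m+1} = d w`, subtracting `∂ w` from `c_m` allows `c_{m+1}` to be replaced by zero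
      refine ⟨t + u, Function.update (Function.update (pushStair x F i u c) m
        (pushStair x F i u c m - F.tmap _ (i + m) w)) (m + 1) 0, ⟨fun p => ?_, fun p hp => ?_⟩,
        Function.update_self .., ?_⟩
      · by_cases h : p = m + 1
        · subst h; rw [Function.update_self]; exact fun b T => zero_mem _
        · rw [Function.update_of_ne h]
          by_cases h' : p = m
          · subst h'
            rw [Function.update_self]
            intro b T
            exact sub_mem (hc'.hom p b T) (KHom_tmap hgm F _ _ _ _ w hwh b T)
          · rw [Function.update_of_ne h']; exact hc'.hom p
      · rw [Function.update_of_ne (show p ≠ m + 1 by omega)]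
        by_cases h : p = m
        · subst h
          rw [Function.update_self, Function.update_self, map_zero]
          funext b
          have h1 := congrFun hrel b
          have h2 := congrFun hwrel b
          simp only [Pi.sub_apply, map_sub] at *
          rw [h1, h2, sub_self]; rfl
        · rw [Function.update_of_ne h, Function.update_of_ne (show p + 1 ≠ m + 1 by omega)]
          by_cases h' : p + 1 = m
          · subst h'
            rw [Function.update_self, map_sub]
            have := F.tmap_tmap_s7 (N := KCochain M n (p + 1)) (i + p) w
            have h3 := hc'.rel p (by omega)
            rw [h3]
            exact (sub_eq_self.2 this).symm
          · rw [Function.update_of_ne h']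
            exact hc'.rel p (by omega)
      · rw [Function.update_of_ne (by omega)]
        cases m with
        | zero =>
          rw [Function.update_self, pushStair_zero, sub_right_comm]
          exact sub_mem h0 ⟨w, rfl⟩
        | succ m =>
          rw [Function.update_of_ne (by omega), pushStair_zero]
          exact h0

/-- Vanishing of local cohomology in the degrees `j - e`, `e` ranging over the degrees of the
generators of `F_{i+p}`, forces `Tor_i(P, M)_j = 0` for `P` killed by all `x_s`. -/
lemma mem_bdry_of_lc {P : Type} [AddCommGroup P] [Module S P] {𝒬 : ℤ → AddSubgroup P}
    {m0 : Set S} (F : MGFR 𝒜 𝒬 m0) (hP : ∀ s, ∀ m : P, x s • m = 0) (i : ℕ) (j : ℤ)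
    (hlc : ∀ p b, ¬ lcNZ x ℳ p (j - F.deg (i + p) b))
    (y : Fin (F.r i) → M) (hy : ∀ b, y b ∈ ℳ (j - F.deg i b)) (hcyc : y ∈ F.cyc M i) :
    y ∈ F.bdry M i := by
  let φ : M →ₗ[S] KCochain M n 0 := LinearMap.pi fun _ => LinearMap.id
  obtain ⟨t, c, hc, hc0⟩ := exists_stair hSG hgm hx F hP i j (fun b => φ (y b))
    (F.map_mem_cyc φ i y hcyc) (fun b T => by simpa [φ] using hy b) (n + 1)
  -- `K^{n+1} = 0`, so a staircase of length `n + 1` ends in zero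
  have hempty : IsEmpty {T : Finset (Fin n) // T.card = n + 1} := ⟨fun T => by
    have := Finset.card_le_univ T.1
    rw [T.2, Fintype.card_fin] at this
    omega⟩
  have := stair_descend hSG hgm hx F.toGFC i j hlc _ (n + 1)
    ⟨t, c, hc, funext fun b => Subsingleton.elim _ _, by rw [hc0, sub_self]; exact zero_mem _⟩
  obtain ⟨w, hw⟩ := this
  refine ⟨fun a => w a ⟨∅, rfl⟩, ?_⟩
  funext b
  have := congrFun (congrFun hw b) ⟨∅, rfl⟩
  rw [F.tmap_pi] at this
  exact this

end Zig

/-! ### Balancing Tor and the degrees of generators -/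

section Balance
variable {S : Type} [CommRing S] {𝒜 : ℤ → AddSubgroup S} {M : Type} [AddCommGroup M] [Module S M]
  {ℳ : ℤ → AddSubgroup M} (hSG : IsStdGraded 𝒜) (hgm : IsGradedMod 𝒜 ℳ)
  (FM : MGFR 𝒜 ℳ ({0} : Set S))
  (Fk : MGFR 𝒜 (qmPiece (sPlus 𝒜 : Submodule S S) 𝒜) ({0} : Set S))

/-- The augmentation `F_0 → M` of a resolution, as a linear map. -/
noncomputable def MGFR.aug {P : Type} [AddCommGroup P] [Module S P] {𝒬 : ℤ → AddSubgroup P}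
    {m0 : Set S} (F : MGFR 𝒜 𝒬 m0) : (Fin (F.r 0) → S) →ₗ[S] P :=
  ∑ a, (LinearMap.proj a : (Fin (F.r 0) → S) →ₗ[S] S).smulRight (F.augm a)

lemma MGFR.aug_apply {P : Type} [AddCommGroup P] [Module S P] {𝒬 : ℤ → AddSubgroup P}
    {m0 : Set S} (F : MGFR 𝒜 𝒬 m0) (z : Fin (F.r 0) → S) : F.aug z = ∑ a, z a • F.augm a := by
  simp [MGFR.aug]

/-- The horizontal cycle condition on an element of `G_q ⊗ F_p` (`F` the resolution of `M`, `G`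
that of the residue field): its image in `G_q ⊗ F_{p-1}`, or in `G_q ⊗ M` for `p = 0`, is a cycle
of the complex in `q`. -/
def BalCond : ∀ (p q : ℕ), (Fin (Fk.r q) → Fin (FM.r p) → S) → Prop
  | 0, q, z => (fun b => FM.aug (z b)) ∈ Fk.cyc M q
  | p + 1, q, z => (fun b => FM.tmap S p (z b)) ∈ Fk.cyc (Fin (FM.r p) → S) q

lemma aug_mem {z : Fin (FM.r 0) → S} {c : ℤ} (hgm : IsGradedMod 𝒜 ℳ)
    (hz : ∀ a, z a ∈ 𝒜 (c - FM.deg 0 a)) : FM.aug z ∈ ℳ c := by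
  rw [FM.aug_apply]
  refine AddSubgroup.sum_mem _ fun a _ => ?_
  have := hgm.smul_mem (hz a) (FM.augm_mem a)
  rwa [sub_add_cancel] at this

lemma GFC.tmap_mem_piece (hSG : IsStdGraded 𝒜) (F : GFC 𝒜) (p : ℕ) {z : Fin (F.r (p + 1)) → S}
    {c : ℤ} (hz : ∀ a, z a ∈ 𝒜 (c - F.deg (p + 1) a)) (b) : F.tmap S p z b ∈ 𝒜 (c - F.deg p b) := by
  rw [F.tmap_apply_s7]
  refine AddSubgroup.sum_mem _ fun a _ => ?_
  have := hSG.mul_mem (F.mat_mem p a b) (hz a)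
  have e : c - F.deg p b = F.deg (p + 1) a - F.deg p b + (c - F.deg (p + 1) a) := by ring
  rw [e]
  exact this

include hSG hgm in
/-- If `Tor_i(k, M)_j`, computed from the resolution of `k`, vanishes, every element of `G_q ⊗ F_p`,
`p + q = i`, of degree `j` satisfying the horizontal cycle condition is a sum of a horizontal and a
vertical boundary. -/
lemma balance_step {i : ℕ} {j : ℤ}
    (hyp : ∀ y : Fin (Fk.r i) → M, (∀ b, y b ∈ ℳ (j - Fk.deg i b)) → y ∈ Fk.cyc M i →
      y ∈ Fk.bdry M i) (p : ℕ) :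
    ∀ q, q + p = i → ∀ z : Fin (Fk.r q) → Fin (FM.r p) → S,
      (∀ b a, z b a ∈ 𝒜 (j - Fk.deg q b - FM.deg p a)) → BalCond FM Fk p q z →
      ∃ (w : Fin (Fk.r (q + 1)) → Fin (FM.r p) → S) (w' : Fin (Fk.r q) → Fin (FM.r (p + 1)) → S),
        ∀ b, z b = Fk.tmap (Fin (FM.r p) → S) q w b + FM.tmap S p (w' b) := by
  obtain ⟨GS⟩ := hSG.isGradedMod.exists_gproj
  induction p with
  | zero =>
    rintro q rfl z hz hc
    obtain ⟨y, hy⟩ := hyp (fun b => FM.aug (z b)) (fun b => aug_mem FM hgm (hz b)) hc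
    have : ∀ a, ∃ w, FM.aug w = y a := fun a => by
      obtain ⟨w, hw⟩ := FM.augm_surj (y a)
      exact ⟨w, (FM.aug_apply w).trans hw⟩
    choose w hw using this
    have hw2 : (fun b => FM.aug (Fk.tmap _ q w b)) = fun b => FM.aug (z b) := by
      rw [← Fk.tmap_map_s7 FM.aug q w]
      simp only [hw]
      exact hy
    have : ∀ b, ∃ w', FM.tmap S 0 w' = z b - Fk.tmap _ q w b := fun b =>
      (FM.exact_zero _).1 (by
        rw [← FM.aug_apply, map_sub, ← congrFun hw2 b, sub_self])
    choose w' hw' using this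
    exact ⟨w, w', fun b => by rw [hw', add_sub_cancel]⟩
  | succ p ih =>
    intro q hq z hz hc
    set Z : Fin (Fk.r q) → Fin (FM.r p) → S := fun b => FM.tmap S p (z b) with hZ
    have hZh : ∀ b a, Z b a ∈ 𝒜 (j - Fk.deg q b - FM.deg p a) := fun b =>
      FM.tmap_mem_piece hSG p (hz b)
    have hex : ∃ y, Fk.tmap (Fin (FM.r p) → S) q y = Z := by
      cases q with
      | succ q => exact Fk.exact_free_succ q Z hc
      | zero =>
        -- minimality: the entries of `Z` lie in `S₊`, which kills `S / S₊`
        refine Fk.exact_free_zero Z fun c => Finset.sum_eq_zero fun b _ => sPlus_smul ?_ _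
        change FM.tmap S p (z b) c ∈ _
        rw [FM.tmap_apply_s7]
        exact Ideal.sum_mem _ fun a _ => Ideal.mul_mem_right _ _ (hSG.mat_mem_sPlus FM p a c)
    obtain ⟨y₀, hy₀⟩ := hex
    obtain ⟨y, hy, hyh⟩ : ∃ y, Fk.tmap (Fin (FM.r p) → S) q y = Z ∧
        ∀ b a, y b a ∈ 𝒜 (j - Fk.deg (q + 1) b - FM.deg p a) := by
      refine ⟨((GS.shift (FM.deg p)).shift (Fk.deg (q + 1))).ρ j y₀, ?_, fun b a => ?_⟩
      · rw [← Fk.tmap_ρ, hy₀]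
        exact GProj.fix _ _ _ (mem_piG.2 fun b => mem_piG.2 fun a => hZh b a)
      · exact mem_piG.1 (mem_piG.1 (GProj.mem _ _ _) b) a
    have hcy : BalCond FM Fk p (q + 1) y := by
      cases p with
      | zero =>
        change Fk.tmap M q _ = 0
        rw [Fk.tmap_map_s7 FM.aug q y, hy]
        funext b
        change FM.aug _ = 0
        rw [FM.aug_apply]
        exact (FM.exact_zero _).2 ⟨z b, rfl⟩
      | succ p =>
        change Fk.tmap _ q _ = 0
        rw [Fk.tmap_map_s7 (FM.tmap S p) q y, hy]
        funext b
        exact FM.tmap_tmap_s7 p (z b)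
    obtain ⟨w, w', hw⟩ := ih (q + 1) (by omega) y hyh hcy
    have hyw : y = Fk.tmap _ (q + 1) w + fun b => FM.tmap S p (w' b) := funext hw
    have hZw : Z = fun b => FM.tmap S p (Fk.tmap _ q w' b) := by
      rw [← hy, hyw, map_add, Fk.tmap_tmap_s7, zero_add]
      exact Fk.tmap_map_s7 (FM.tmap S p) q w'
    have : ∀ b, ∃ w'', FM.tmap S (p + 1) w'' = z b - Fk.tmap _ q w' b := fun b =>
      (FM.exact_succ p _).1 (by
        change FM.tmap S p _ = 0
        rw [map_sub, ← congrFun hZw b, sub_self])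
    choose w'' hw'' using this
    exact ⟨w', w'', fun b => by rw [hw'', add_sub_cancel]⟩

include hSG hgm in
/-- If `Tor_i(k, M)_j`, computed from the resolution of `k`, vanishes, then the minimal resolution
of `M` has no generator of degree `j` in homological degree `i`. -/
lemma deg_ne_of_vanish [Nontrivial S] {i : ℕ} {j : ℤ}
    (hyp : ∀ y : Fin (Fk.r i) → M, (∀ b, y b ∈ ℳ (j - Fk.deg i b)) → y ∈ Fk.cyc M i →
      y ∈ Fk.bdry M i) (a : Fin (FM.r i)) : FM.deg i a ≠ j := by
  rintro rfl
  obtain ⟨b₀, hb₀⟩ : ∃ b, Fk.augm b ≠ 0 := by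
    by_contra hcon
    push Not at hcon
    obtain ⟨z, hz⟩ := Fk.augm_surj (Submodule.Quotient.mk 1)
    simp only [hcon, smul_zero, Finset.sum_const_zero] at hz
    exact hSG.one_notMem ((Submodule.Quotient.mk_eq_zero _).1 hz.symm)
  have hdeg : Fk.deg 0 b₀ = 0 := by
    by_contra h
    exact hb₀ (hSG.qmPiece_eq_zero (Fk.augm_mem b₀) h)
  -- the generator `b₀ ⊗ a` of `G_0 ⊗ F_i` would be a sum of boundaries
  let z : Fin (Fk.r 0) → Fin (FM.r i) → S := Pi.single b₀ (Pi.single a 1)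
  obtain ⟨w, w', hw⟩ := balance_step hSG hgm FM Fk hyp i 0 (zero_add i) z
    (fun b c => by
      by_cases hb : b = b₀
      · subst hb
        by_cases hc : c = a
        · subst hc
          simpa [z, hdeg] using hSG.one_mem
        · simp [z, hc]
      · simp [z, hb]) (by cases i <;> trivial)
  apply hb₀
  have h1 : ∑ b, z b a • Fk.augm b = Fk.augm b₀ := by
    rw [Finset.sum_eq_single b₀]
    · simp [z]
    · intro b _ hb
      simp [z, hb]
    · simp
  rw [← h1]
  simp only [hw, Pi.add_apply, add_smul, Finset.sum_add_distrib]
  rw [(Fk.exact_zero fun b => Fk.tmap _ 0 w b a).2 ⟨fun b => w b a, ?_⟩, zero_add]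
  · refine Finset.sum_eq_zero fun b _ => sPlus_smul ?_ _
    rw [FM.tmap_apply_s7]
    exact Ideal.sum_mem _ fun c _ => Ideal.mul_mem_right _ _ (hSG.mat_mem_sPlus FM i c a)
  · funext b
    exact (Fk.tmap_pi 0 w b a).symm

include hSG in
/-- The degrees of `Tor_i(P, k)` occur among those of the generators of `F_i`. -/
lemma exists_deg_of_HNZ (F : GFC 𝒜) {i : ℕ} {j : ℤ}
    (h : F.HNZ (S ⧸ (sPlus 𝒜 : Submodule S S)) (qmPiece (sPlus 𝒜 : Submodule S S) 𝒜) i j) :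
    ∃ a, F.deg i a = j := by
  by_contra hcon
  push Not at hcon
  apply h
  rw [eq_bot_iff]
  intro v hv
  obtain ⟨z, hz, rfl⟩ := hv
  have hz0 : z = 0 := by
    refine Subtype.ext (funext fun a => ?_)
    refine hSG.qmPiece_eq_zero (e := j - F.deg i a) ?_ (sub_ne_zero.2 (hcon a).symm)
    exact (AddSubgroup.mem_pi _).1 hz a trivial
  rw [hz0]
  exact AddSubgroup.mem_bot.2 (map_zero _)

/-- A homogeneous cycle that is not a boundary has nonzero class. -/
lemma GFC.HNZ_of_cycle (F : GFC 𝒜) {N : Type} [AddCommGroup N] [Module S N]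
    {𝒩 : ℤ → AddSubgroup N} {q : ℕ} {j : ℤ} (v : Fin (F.r q) → N) (hv : v ∈ F.cyc N q)
    (hj : v ∈ F.fpiece N 𝒩 q j) (hb : v ∉ F.bdry N q) : F.HNZ N 𝒩 q j := by
  intro hbot
  apply hb
  have h1 : (Submodule.mkQ (Submodule.comap (F.cyc N q).subtype (F.bdry N q))).toAddMonoidHom
      ⟨v, hv⟩ ∈ F.Hpiece N 𝒩 q j := ⟨⟨v, hv⟩, hj, rfl⟩
  have h2 := AddSubgroup.mem_bot.1 (hbot.le h1)
  exact (Submodule.Quotient.mk_eq_zero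
    (Submodule.comap (F.cyc N q).subtype (F.bdry N q))).1 h2

include hSG in
/-- By minimality, every generator of `F_q` contributes to `Tor_q(P, k)`. -/
lemma HNZ_deg [Nontrivial S] {P : Type} [AddCommGroup P] [Module S P] {𝒬 : ℤ → AddSubgroup P}
    (F : MGFR 𝒜 𝒬 ({0} : Set S)) (q : ℕ) (b : Fin (F.r q)) :
    F.toGFC.HNZ (S ⧸ (sPlus 𝒜 : Submodule S S)) (qmPiece (sPlus 𝒜 : Submodule S S) 𝒜) q
      (F.deg q b) := by
  have hzero : ∀ q, F.tmap (S ⧸ (sPlus 𝒜 : Submodule S S)) q = 0 := fun q => by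
    refine LinearMap.ext fun z => funext fun c => ?_
    rw [F.tmap_apply_s7]
    exact Finset.sum_eq_zero fun a _ => sPlus_smul (hSG.mat_mem_sPlus F q a c) _
  let v : Fin (F.r q) → S ⧸ (sPlus 𝒜 : Submodule S S) := Pi.single b (Submodule.Quotient.mk 1)
  have hv : v ∈ F.cyc _ q := by
    cases q with
    | zero => trivial
    | succ q =>
      change F.tmap _ q v = 0
      rw [hzero]; rfl
  refine F.HNZ_of_cycle v hv ((AddSubgroup.mem_pi _).2 fun c _ => ?_) ?_
  · by_cases hc : c = b
    · subst hc
      simp only [v, Pi.single_eq_same, sub_self]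
      exact ⟨1, hSG.one_mem, rfl⟩
    · simp only [v, Pi.single_eq_of_ne hc]
      exact zero_mem _
  · rintro ⟨w, hw⟩
    rw [hzero] at hw
    have := congrFun hw b
    simp only [v, Pi.single_eq_same, LinearMap.zero_apply, Pi.zero_apply] at this
    exact hSG.one_notMem ((Submodule.Quotient.mk_eq_zero _).1 this.symm)

end Balance

/-- **Betti numbers bounded by local cohomology** (Proposition 2.4).  Let `S` be a standard
graded algebra over a field `k`, `M` a finitely generated graded `S`-module of dimension `d`.
Then for every `i`, `b_i^S(M) ≤ max_{0 ≤ p ≤ d} (a_p(M) + b_{p+i}^S(k))`, stated elementwise: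
here `b_i^S(M)` is computed from the graded pieces of `Tor_i^S(M, k) = H_i(F_• ⊗_S S/S₊)`
for a minimal graded free resolution `F_•` of `M`, and similarly `b_j^S(k)` from a minimal
graded free resolution of `k = S/S₊`. -/
theorem betti_le_local_cohomology (S : Type) [CommRing S] [IsNoetherianRing S]
    (𝒜 : ℤ → AddSubgroup S) (hSG : IsStdGraded 𝒜)
    (k : Type) [Field k] [Algebra k S] (hover : GradedOver 𝒜 k)
    {n : ℕ} (x : Fin n → S) (hx : GensDegOne 𝒜 x)
    (M : Type) [AddCommGroup M] [Module S M] [Module.Finite S M]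
    (ℳ : ℤ → AddSubgroup M) (hgm : IsGradedMod 𝒜 ℳ)
    (FM : MGFR 𝒜 ℳ ({0} : Set S))
    (Fk : MGFR 𝒜 (qmPiece (sPlus 𝒜 : Submodule S S) 𝒜) ({0} : Set S))
    (d : ℕ) (hd : mdim S M = (d : WithBot (WithTop ℕ))) :
    ∀ (i : ℕ) (j : ℤ),
      FM.toGFC.HNZ (S ⧸ (sPlus 𝒜 : Submodule S S)) (qmPiece (sPlus 𝒜 : Submodule S S) 𝒜) i j →
      ∃ p : ℕ, p ≤ d ∧ ∃ j₁ : ℤ, lcNZ x ℳ p j₁ ∧ ∃ j₂ : ℤ,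
        Fk.toGFC.HNZ (S ⧸ (sPlus 𝒜 : Submodule S S)) (qmPiece (sPlus 𝒜 : Submodule S S) 𝒜)
          (p + i) j₂ ∧
        j ≤ j₁ + j₂ := by
  intro i j h
  by_contra hcon
  have : Nontrivial S := hover.1.nontrivial
  obtain ⟨a, ha⟩ := exists_deg_of_HNZ hSG FM.toGFC h
  have hlc : ∀ p b, ¬ lcNZ x ℳ p (j - Fk.deg (i + p) b) := by
    intro p b hb
    rcases le_or_gt p d with hp | hp
    · refine hcon ⟨p, hp, _, hb, Fk.deg (i + p) b, ?_, by omega⟩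
      rw [Nat.add_comm p i]
      exact HNZ_deg hSG Fk (i + p) b
    · -- above the dimension all local cohomology vanishes
      have hdim : Module.supportDim S M < ((p : ℕ∞) : WithBot ℕ∞) := by
        rw [Module.supportDim_eq_ringKrullDim_quotient_annihilator]
        change mdim S M < _
        rw [hd]
        exact WithBot.coe_lt_coe.2 (Nat.cast_lt (α := ℕ∞).2 hp)
      obtain ⟨t, z, -, hz, hz'⟩ := hb
      obtain ⟨u, hu⟩ := KVan_of_supportDim_lt x p M hdim t z hz
      exact hz' u hu
  have hP : ∀ s, ∀ m : S ⧸ (sPlus 𝒜 : Submodule S S), x s • m = 0 := fun s =>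
    sPlus_smul (hSG.mem_sPlus (hx.1 s) one_ne_zero)
  exact deg_ne_of_vanish hSG hgm FM Fk
    (fun y hy hc => mem_bdry_of_lc hSG hgm hx.1 Fk hP i j hlc y hy hc) a ha
end
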